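/- Weighted Poincaré inequality with power weights (constant exponent case): let Ω ⊂ ℝⁿ be a bounded convex open set, let 1 < p ≤ q < ∞ and a ≤ b be reals with −n/q < a and b < n/p' satisfying 1/p − 1/q ≤ 1/n + (a−b)/n. Then for all f ∈ C^∞(Ω̄), ‖|x|^a (f − ⟨f⟩_Ω)‖_{L^q(Ω)} ≤ C ‖|x|^b ∇f‖_{L^p(Ω)}, with C independent of f. -/

import Mathlib

open MeasureTheory Metric

/-!
Averaging `f x - f y` over `y ∈ Ω`, writing it as an integral of `∇f` along the segment from `x` to
`y` and changing variables gives the subrepresentation formula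
`|f - ⟨f⟩_Ω| ≤ C ∫_Ω |x - z|^(1 - n) |∇f(z)| dz` on `Ω`. By duality it remains to bound the bilinear
form of the Stein–Weiss kernel `|x|^a |x - y|^(1 - n) |y|^(-b)` on `L^q'(Ω) × L^p(Ω)`. Where one of
`|x|`, `|y|` is at least twice the other, the kernel is dominated by a Hardy kernel
`|x|^(-s) |y|^(-t)`, to which a weighted Schur test applies. Where they are comparable, the weights
can be moved from `y` to `x` and back: if `p = q`, the kernel is bounded by
`|x|^(-σ) |x - y|^(σ - n)` on `|x - y| ≤ 3|x|` and the Schur test applies; if `p < q`, the remaining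
weight is absorbed into `|x - y|` and the Hardy–Littlewood–Sobolev inequality applies.
-/

open Set Filter
open scoped ENNReal NNReal

local notation "dim" => Module.finrank ℝ

section Radial

theorem ofReal_norm_rpow {E : Type*} [NormedAddCommGroup E] {x : E} (hx : x ≠ 0) (s : ℝ) :
    ENNReal.ofReal (‖x‖ ^ s) = ‖x‖ₑ ^ s := by
  rw [← ofReal_norm, ENNReal.ofReal_rpow_of_pos (norm_pos_iff.2 hx)]

theorem enorm_le_ofReal {E : Type*} [SeminormedAddGroup E] {x : E} {r : ℝ} (h : ‖x‖ ≤ r) :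
    ‖x‖ₑ ≤ ENNReal.ofReal r :=
  (ofReal_norm x).symm.trans_le (ENNReal.ofReal_le_ofReal h)

variable {E : Type*} [NormedAddCommGroup E] [NormedSpace ℝ E] [MeasurableSpace E] [BorelSpace E]
  [FiniteDimensional ℝ E] (μ : Measure E) [μ.IsAddHaarMeasure]

theorem lintegral_comp_smul_haar (f : E → ℝ≥0∞) {r : ℝ} (hr : 0 < r) :
    ∫⁻ x, f (r • x) ∂μ = ENNReal.ofReal r ^ (-dim E : ℝ) * ∫⁻ x, f x ∂μ := by
  have hemb : MeasurableEmbedding (r • · : E → E) :=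
    (Homeomorph.smulOfNeZero r hr.ne').measurableEmbedding
  rw [← hemb.lintegral_map, Measure.map_addHaar_smul μ hr.ne', lintegral_smul_measure,
    abs_of_pos (by positivity), ENNReal.ofReal_inv_of_pos (by positivity),
    ENNReal.ofReal_pow hr.le, ENNReal.rpow_neg, ENNReal.rpow_natCast, smul_eq_mul]

theorem setLIntegral_enorm_sub_rpow_eq (c : E) (s : ℝ) {ρ : ℝ≥0∞} (hρ : ρ ≠ 0) (hρ' : ρ ≠ ⊤)
    {T : Set ℝ≥0∞} (hT : MeasurableSet T) :
    ∫⁻ x in {x | ‖x - c‖ₑ / ρ ∈ T}, ‖x - c‖ₑ ^ s ∂μ =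
      ρ ^ (s + dim E) * ∫⁻ x in {x : E | ‖x‖ₑ ∈ T}, ‖x‖ₑ ^ s ∂μ := by
  have hpos : 0 < ρ.toReal := ENNReal.toReal_pos hρ hρ'
  have hscale (x : E) : ‖ρ.toReal⁻¹ • x‖ₑ = ‖x‖ₑ / ρ := by
    rw [enorm_smul, Real.enorm_of_nonneg (by positivity), ENNReal.ofReal_inv_of_pos hpos,
      ENNReal.ofReal_toReal hρ', ENNReal.div_eq_inv_mul]
  set φ : E → ℝ≥0∞ := {x : E | ‖x‖ₑ ∈ T}.indicator fun x ↦ ‖x‖ₑ ^ s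
  have hφ (x : E) : {x : E | ‖x‖ₑ / ρ ∈ T}.indicator (fun x ↦ ‖x‖ₑ ^ s) x =
      ρ ^ s * φ (ρ.toReal⁻¹ • x) := by
    by_cases hx : ‖x‖ₑ / ρ ∈ T
    · simp only [φ, indicator, mem_ofPred_eq, hscale, hx, if_true]
      rw [ENNReal.div_eq_inv_mul, ENNReal.mul_rpow_of_ne_top (ENNReal.inv_ne_top.2 hρ) enorm_ne_top,
        ENNReal.inv_rpow, ENNReal.mul_inv_cancel_left] <;> simp [*]
    · simp [φ, indicator, hscale, hx]
  have hmeas : MeasurableSet {x : E | ‖x‖ₑ / ρ ∈ T} := by measurability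
  calc
    _ = ∫⁻ x, {x : E | ‖x‖ₑ / ρ ∈ T}.indicator (fun x ↦ ‖x‖ₑ ^ s) (x - c) ∂μ :=
      (lintegral_indicator (hmeas.preimage (measurable_id.sub_const c)) _).symm
    _ = ∫⁻ x, {x : E | ‖x‖ₑ / ρ ∈ T}.indicator (fun x ↦ ‖x‖ₑ ^ s) x ∂μ :=
      lintegral_sub_right_eq_self _ c
    _ = ρ ^ s * ∫⁻ x, φ (ρ.toReal⁻¹ • x) ∂μ := by
      simp_rw [hφ]
      exact lintegral_const_mul' _ _ (by simp [*])
    _ = ρ ^ (s + dim E) * ∫⁻ x, φ x ∂μ := by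
      rw [lintegral_comp_smul_haar μ φ (inv_pos.2 hpos), ENNReal.ofReal_inv_of_pos hpos,
        ENNReal.ofReal_toReal hρ', ENNReal.inv_rpow, ENNReal.rpow_neg, inv_inv, ← mul_assoc,
        ENNReal.rpow_add _ _ hρ hρ']
    _ = _ := by
      congr 1
      exact lintegral_indicator (measurable_enorm hT) _

variable {s : ℝ}

theorem setLIntegral_enorm_rpow_closedBall_lt_top [Nontrivial E] (hs : -dim E < s) :
    ∫⁻ x in {x : E | ‖x‖ₑ ≤ 1}, ‖x‖ₑ ^ s ∂μ < ⊤ := by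
  have hint : IntegrableOn (fun x : E ↦ ‖x‖ ^ s) (ball 0 2) μ :=
    integrableOn_ball_of_norm_le_rpow (C := 1) (α := -s) Module.finrank_pos (by linarith)
      (ae_of_all _ fun x ↦ by simp [abs_of_nonneg (Real.rpow_nonneg (norm_nonneg x) s)])
      (measurable_norm.pow_const s).aestronglyMeasurable
  have hsub : {x : E | ‖x‖ₑ ≤ 1} ⊆ ball 0 2 := fun x (hx : ‖x‖ₑ ≤ 1) ↦ by
    have : ‖x‖ ≤ 1 := by simpa [← ofReal_norm] using hx
    simpa using this.trans_lt one_lt_two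
  refine lt_of_le_of_lt (lintegral_mono_ae ?_) (hint.mono_set hsub).2
  filter_upwards [ae_restrict_of_ae (Measure.ae_ne μ 0)] with x hx
  rw [Real.enorm_of_nonneg (by positivity), ofReal_norm_rpow hx]

theorem setLIntegral_enorm_rpow_compl_ball_lt_top (hs : s < -dim E) :
    ∫⁻ x in {x : E | 1 ≤ ‖x‖ₑ}, ‖x‖ₑ ^ s ∂μ < ⊤ := by
  have hs0 : s ≤ 0 := hs.le.trans (by simp)
  have hle (x : E) (hx : 1 ≤ ‖x‖ₑ) :
      ‖x‖ₑ ^ s ≤ ENNReal.ofReal (2 ^ (-s)) * ENNReal.ofReal ((1 + ‖x‖) ^ s) := by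
    have hx1 : 1 ≤ ‖x‖ := by simpa [← ofReal_norm] using hx
    rw [← ofReal_norm, ENNReal.ofReal_rpow_of_pos (by positivity),
      ← ENNReal.ofReal_mul (by positivity), Real.rpow_neg zero_le_two, ← Real.inv_rpow zero_le_two,
      ← Real.mul_rpow (by positivity) (by positivity)]
    exact ENNReal.ofReal_le_ofReal
      (Real.rpow_le_rpow_of_nonpos (by positivity) (by linarith) hs0)
  calc
    _ ≤ ∫⁻ x in {x : E | 1 ≤ ‖x‖ₑ},
          ENNReal.ofReal (2 ^ (-s)) * ENNReal.ofReal ((1 + ‖x‖) ^ s) ∂μ :=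
      setLIntegral_mono (by fun_prop) hle
    _ ≤ ENNReal.ofReal (2 ^ (-s)) * ∫⁻ x, ENNReal.ofReal ((1 + ‖x‖) ^ s) ∂μ := by
      rw [lintegral_const_mul _ (by fun_prop)]
      exact mul_le_mul_right (setLIntegral_le_lintegral _ _) _
    _ < ⊤ := by
      have := finite_integral_one_add_norm (μ := μ) (r := -s) (by linarith)
      simp only [neg_neg] at this
      exact ENNReal.mul_lt_top ENNReal.ofReal_lt_top this

theorem exists_setLIntegral_enorm_sub_rpow_le [Nontrivial E] (hs : -dim E < s) :
    ∃ C : ℝ≥0, ∀ (c : E) (ρ : ℝ≥0∞), ρ ≠ 0 → ρ ≠ ⊤ →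
      ∫⁻ x in {x | ‖x - c‖ₑ ≤ ρ}, ‖x - c‖ₑ ^ s ∂μ ≤ C * ρ ^ (s + dim E) := by
  lift ∫⁻ x in {x : E | ‖x‖ₑ ≤ 1}, ‖x‖ₑ ^ s ∂μ to ℝ≥0
    using (setLIntegral_enorm_rpow_closedBall_lt_top μ hs).ne with C hC
  refine ⟨C, fun c ρ hρ hρ' ↦ ?_⟩
  have := setLIntegral_enorm_sub_rpow_eq μ c s hρ hρ' measurableSet_Iic (T := Iic 1)
  simp only [mem_Iic, ENNReal.div_le_iff hρ hρ', one_mul, ← hC] at this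
  exact (this.trans (mul_comm _ _)).le

theorem exists_setLIntegral_le_enorm_sub_rpow_le (hs : s < -dim E) :
    ∃ C : ℝ≥0, ∀ (c : E) (ρ : ℝ≥0∞), ρ ≠ 0 → ρ ≠ ⊤ →
      ∫⁻ x in {x | ρ ≤ ‖x - c‖ₑ}, ‖x - c‖ₑ ^ s ∂μ ≤ C * ρ ^ (s + dim E) := by
  lift ∫⁻ x in {x : E | 1 ≤ ‖x‖ₑ}, ‖x‖ₑ ^ s ∂μ to ℝ≥0
    using (setLIntegral_enorm_rpow_compl_ball_lt_top μ hs).ne with C hC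
  refine ⟨C, fun c ρ hρ hρ' ↦ ?_⟩
  have := setLIntegral_enorm_sub_rpow_eq μ c s hρ hρ' measurableSet_Ici (T := Ici 1)
  simp only [mem_Ici, ENNReal.le_div_iff_mul_le (.inl hρ) (.inl hρ'), one_mul, ← hC] at this
  exact (this.trans (mul_comm _ _)).le

end Radial

section LebesgueIntegral

theorem indicator_rpow {α : Type*} {p : ℝ} (hp : 0 < p) (s : Set α) (f : α → ℝ≥0∞) (x : α) :
    s.indicator f x ^ p = s.indicator (fun x ↦ f x ^ p) x :=
  (congrFun (indicator_comp_of_zero (g := (· ^ p)) (ENNReal.zero_rpow_of_pos hp)) x).symm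

theorem rpow_rpow_mul_rpow_rpow {r s t : ℝ} (hs : 0 ≤ s) (ht : 0 ≤ t) (h : r * (s + t) = 1)
    (x : ℝ≥0∞) : (x ^ r) ^ s * (x ^ r) ^ t = x := by
  rw [← ENNReal.rpow_add_of_nonneg _ _ hs ht, ← ENNReal.rpow_mul, h, ENNReal.rpow_one]

variable {α : Type*} [MeasurableSpace α] {μ : Measure α} {f : α → ℝ≥0∞} {p : ℝ}

theorem ae_eq_zero_of_lintegral_rpow_rpow_eq_zero (hp : 0 < p) (hf : Measurable f)
    (h : (∫⁻ x, f x ^ p ∂μ) ^ (1 / p) = 0) : f =ᵐ[μ] 0 := by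
  rw [ENNReal.rpow_eq_zero_iff_of_pos (by positivity),
    lintegral_eq_zero_iff (hf.pow_const p)] at h
  exact h.mono fun x hx ↦ (ENNReal.rpow_eq_zero_iff_of_pos hp).1 hx

theorem lintegral_inv_mul_rpow_eq_one (hp : 0 < p)
    (h₀ : (∫⁻ x, f x ^ p ∂μ) ^ (1 / p) ≠ 0) (h₁ : (∫⁻ x, f x ^ p ∂μ) ^ (1 / p) ≠ ⊤) :
    ∫⁻ x, (((∫⁻ x, f x ^ p ∂μ) ^ (1 / p))⁻¹ * f x) ^ p ∂μ = 1 := by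
  simp only [one_div] at h₀ h₁ ⊢
  simp_rw [ENNReal.mul_rpow_of_nonneg _ _ hp.le, ENNReal.inv_rpow, ENNReal.rpow_inv_rpow hp.ne']
  rw [lintegral_const_mul', ENNReal.inv_mul_cancel] <;> simp_all

theorem lintegral_prod_fst_mul_le {β : Type*} [MeasurableSpace β] {ν : Measure β} [SFinite ν]
    {K : α × β → ℝ≥0∞} (hf : Measurable f) (hK : Measurable K) {A : ℝ≥0∞}
    (hA : ∀ᵐ x ∂μ, ∫⁻ y, K (x, y) ∂ν ≤ A) :
    ∫⁻ z, f z.1 * K z ∂μ.prod ν ≤ (∫⁻ x, f x ∂μ) * A := by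
  rw [lintegral_prod _ (by fun_prop), ← lintegral_mul_const _ hf]
  refine lintegral_mono_ae (hA.mono fun x hx ↦ ?_)
  dsimp only
  rw [lintegral_const_mul _ (by fun_prop)]
  gcongr

theorem lintegral_mul_mul_rpow_le {f g h : α → ℝ≥0∞} (hf : AEMeasurable f μ)
    (hg : AEMeasurable g μ) (hh : AEMeasurable h μ) {s t u : ℝ} (hs : 0 ≤ s) (ht : 0 ≤ t)
    (hu : 0 ≤ u) (hstu : s + t + u = 1) :
    ∫⁻ x, f x ^ s * g x ^ t * h x ^ u ∂μ ≤
      (∫⁻ x, f x ∂μ) ^ s * (∫⁻ x, g x ∂μ) ^ t * (∫⁻ x, h x ∂μ) ^ u := by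
  simpa [Fin.prod_univ_three] using
    ENNReal.lintegral_prod_norm_pow_le (μ := μ) Finset.univ (f := ![f, g, h]) (p := ![s, t, u])
      (by simp [Fin.forall_fin_succ, hf, hg, hh]) (by simp [Fin.sum_univ_three, hstu])
      (by simp [Fin.forall_fin_succ, hs, ht, hu])

end LebesgueIntegral

section BoundedForm

variable {α β : Type*} [MeasurableSpace α] [MeasurableSpace β] {μ : Measure α} {ν : Measure β}
  {r p q : ℝ} {K K₁ K₂ : α × β → ℝ≥0∞}

/-- The bilinear form `(f, g) ↦ ∫∫ f(x) K(x, y) g(y)` on nonnegative functions is bounded on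
`L^r(μ) × L^p(ν)`. By duality, the integral operator with kernel `K` then maps `L^p(ν)` into the
dual of `L^r(μ)`; the form is used instead of the operator because it is symmetric in the two
variables. -/
def IsBoundedForm (r p : ℝ) (μ : Measure α) (ν : Measure β) (K : α × β → ℝ≥0∞) : Prop :=
  ∃ C : ℝ≥0, ∀ (f : α → ℝ≥0∞) (g : β → ℝ≥0∞), Measurable f → Measurable g →
    ∫⁻ z, f z.1 * K z * g z.2 ∂μ.prod ν ≤
      C * (∫⁻ x, f x ^ r ∂μ) ^ (1 / r) * (∫⁻ y, g y ^ p ∂ν) ^ (1 / p)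

namespace IsBoundedForm

theorem mono {c : ℝ≥0∞} (hc : c ≠ ⊤) (hK₂ : IsBoundedForm r p μ ν K₂)
    (hle : ∀ᵐ z ∂μ.prod ν, K₁ z ≤ c * K₂ z) : IsBoundedForm r p μ ν K₁ := by
  lift c to ℝ≥0 using hc
  obtain ⟨C, hC⟩ := hK₂
  refine ⟨c * C, fun f g hf hg ↦ ?_⟩
  calc
    _ ≤ ∫⁻ z, c * (f z.1 * K₂ z * g z.2) ∂μ.prod ν := by
      refine lintegral_mono_ae (hle.mono fun z hz ↦ ?_)
      grw [hz]
      exact le_of_eq (by ring)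
    _ = c * ∫⁻ z, f z.1 * K₂ z * g z.2 ∂μ.prod ν := lintegral_const_mul' _ _ ENNReal.coe_ne_top
    _ ≤ c * (C * (∫⁻ x, f x ^ r ∂μ) ^ (1 / r) * (∫⁻ y, g y ^ p ∂ν) ^ (1 / p)) := by
      grw [hC f g hf hg]
    _ = _ := by push_cast; ring

theorem add (h₁ : IsBoundedForm r p μ ν K₁) (h₂ : IsBoundedForm r p μ ν K₂) (hK₁ : Measurable K₁) :
    IsBoundedForm r p μ ν (K₁ + K₂) := by
  obtain ⟨C₁, hC₁⟩ := h₁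
  obtain ⟨C₂, hC₂⟩ := h₂
  refine ⟨C₁ + C₂, fun f g hf hg ↦ ?_⟩
  simp only [Pi.add_apply, mul_add, add_mul, ENNReal.coe_add]
  rw [lintegral_add_left (by fun_prop)]
  exact add_le_add (hC₁ f g hf hg) (hC₂ f g hf hg)

theorem swap [SFinite μ] [SFinite ν] (h : IsBoundedForm r p μ ν K) :
    IsBoundedForm p r ν μ (K ∘ Prod.swap) := by
  obtain ⟨C, hC⟩ := h
  refine ⟨C, fun g f hg hf ↦ ?_⟩
  calc
    _ = ∫⁻ z, f z.1 * K z * g z.2 ∂μ.prod ν := by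
      rw [← lintegral_prod_swap]
      simp only [Function.comp_apply, Prod.swap_swap, Prod.fst_swap, Prod.snd_swap]
      exact lintegral_congr fun z ↦ by ring
    _ ≤ _ := hC f g hf hg
    _ = _ := by ring

theorem restrict [SFinite μ] [SFinite ν] (hr : 0 < r) (hp : 0 < p) (h : IsBoundedForm r p μ ν K)
    {s : Set α} {t : Set β} (hs : MeasurableSet s) (ht : MeasurableSet t) :
    IsBoundedForm r p (μ.restrict s) (ν.restrict t) K := by
  obtain ⟨C, hC⟩ := h
  refine ⟨C, fun f g hf hg ↦ ?_⟩
  calc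
    _ = ∫⁻ z, s.indicator f z.1 * K z * t.indicator g z.2 ∂μ.prod ν := by
      rw [Measure.prod_restrict, ← lintegral_indicator (hs.prod ht)]
      refine lintegral_congr fun z ↦ ?_
      by_cases h₁ : z.1 ∈ s <;> by_cases h₂ : z.2 ∈ t <;> simp [indicator, h₁, h₂]
    _ ≤ _ := hC _ _ (hf.indicator hs) (hg.indicator ht)
    _ = _ := by
      simp only [indicator_rpow hr, indicator_rpow hp, lintegral_indicator hs,
        lintegral_indicator ht]

theorem of_unit [SFinite ν] (hr : 0 < r) (hp : 0 < p)
    (h : ∃ C : ℝ≥0, ∀ (f : α → ℝ≥0∞) (g : β → ℝ≥0∞), Measurable f → Measurable g →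
      ∫⁻ x, f x ^ r ∂μ ≤ 1 → ∫⁻ y, g y ^ p ∂ν ≤ 1 → ∫⁻ z, f z.1 * K z * g z.2 ∂μ.prod ν ≤ C) :
    IsBoundedForm r p μ ν K := by
  obtain ⟨C, hC⟩ := h
  refine ⟨C + 1, fun f g hf hg ↦ ?_⟩
  set A := (∫⁻ x, f x ^ r ∂μ) ^ (1 / r)
  set B := (∫⁻ y, g y ^ p ∂ν) ^ (1 / p)
  rcases eq_or_ne A 0 with hA | hA
  · have hf0 : f =ᵐ[μ] 0 := ae_eq_zero_of_lintegral_rpow_rpow_eq_zero hr hf hA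
    refine (lintegral_congr_ae ?_).trans_le (lintegral_zero.trans_le zero_le)
    filter_upwards [Measure.quasiMeasurePreserving_fst.ae hf0] with z hz
    simp [hz]
  rcases eq_or_ne B 0 with hB | hB
  · have hg0 : g =ᵐ[ν] 0 := ae_eq_zero_of_lintegral_rpow_rpow_eq_zero hp hg hB
    refine (lintegral_congr_ae ?_).trans_le (lintegral_zero.trans_le zero_le)
    filter_upwards [Measure.quasiMeasurePreserving_snd.ae hg0] with z hz
    simp [hz]
  rcases eq_or_ne A ⊤ with hA' | hA'
  · simp [hA', hB]
  rcases eq_or_ne B ⊤ with hB' | hB'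
  · simp [hB', hA]
  calc
    _ = ∫⁻ z, A * B * (A⁻¹ * f z.1 * K z * (B⁻¹ * g z.2)) ∂μ.prod ν := by
      refine lintegral_congr fun z ↦ ?_
      rw [show A * B * (A⁻¹ * f z.1 * K z * (B⁻¹ * g z.2)) =
        A * A⁻¹ * (B * B⁻¹) * (f z.1 * K z * g z.2) by ring,
        ENNReal.mul_inv_cancel hA hA', ENNReal.mul_inv_cancel hB hB', one_mul, one_mul]
    _ = A * B * ∫⁻ z, A⁻¹ * f z.1 * K z * (B⁻¹ * g z.2) ∂μ.prod ν :=
      lintegral_const_mul' _ _ (ENNReal.mul_ne_top hA' hB')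
    _ ≤ A * B * C := by
      gcongr
      exact hC _ _ (by fun_prop) (by fun_prop)
        (lintegral_inv_mul_rpow_eq_one hr hA hA').le (lintegral_inv_mul_rpow_eq_one hp hB hB').le
    _ ≤ (C + 1 : ℝ≥0) * A * B := by
      rw [mul_comm, ← mul_assoc]
      gcongr
      simp

theorem schur [SFinite μ] [SFinite ν] (hr : 1 ≤ r) (hp : 1 ≤ p) (hrp : 1 ≤ 1 / p + 1 / r)
    (hK₁ : Measurable K₁) (hK₂ : Measurable K₂) {A : ℝ≥0}
    (hA₁ : ∀ᵐ x ∂μ, ∫⁻ y, K₁ (x, y) ∂ν ≤ A) (hA₂ : ∀ᵐ y ∂ν, ∫⁻ x, K₂ (x, y) ∂μ ≤ A) :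
    IsBoundedForm r p μ ν fun z ↦ K₁ z ^ (1 - 1 / p) * K₂ z ^ (1 - 1 / r) := by
  set θ := 1 / p + 1 / r - 1
  have hθ : 0 ≤ θ := sub_nonneg.2 hrp
  have hp1 : 0 ≤ 1 - 1 / p := sub_nonneg.2 ((div_le_one (by linarith)).2 hp)
  have hr1 : 0 ≤ 1 - 1 / r := sub_nonneg.2 ((div_le_one (by linarith)).2 hr)
  have hrθ : r * (θ + (1 - 1 / p)) = 1 := by simp only [θ]; field_simp; ring
  have hpθ : p * (θ + (1 - 1 / r)) = 1 := by simp only [θ]; field_simp; ring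
  refine ⟨A ^ (1 - 1 / p) * A ^ (1 - 1 / r), fun f g hf hg ↦ ?_⟩
  set I := ∫⁻ x, f x ^ r ∂μ
  set J := ∫⁻ y, g y ^ p ∂ν
  have hI : ∫⁻ z, f z.1 ^ r * K₁ z ∂μ.prod ν ≤ I * A :=
    lintegral_prod_fst_mul_le (hf.pow_const r) hK₁ hA₁
  have hJ : ∫⁻ z, g z.2 ^ p * K₂ z ∂μ.prod ν ≤ J * A := by
    rw [← lintegral_prod_swap]
    exact lintegral_prod_fst_mul_le (hg.pow_const p) (hK₂.comp measurable_swap) hA₂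
  calc
    _ = ∫⁻ z, (f z.1 ^ r * g z.2 ^ p) ^ θ * (f z.1 ^ r * K₁ z) ^ (1 - 1 / p) *
          (g z.2 ^ p * K₂ z) ^ (1 - 1 / r) ∂μ.prod ν := by
      refine lintegral_congr fun z ↦ ?_
      simp only [ENNReal.mul_rpow_of_nonneg _ _ hθ, ENNReal.mul_rpow_of_nonneg _ _ hp1,
        ENNReal.mul_rpow_of_nonneg _ _ hr1]
      conv_lhs => rw [← rpow_rpow_mul_rpow_rpow hθ hp1 hrθ (f z.1),
        ← rpow_rpow_mul_rpow_rpow hθ hr1 hpθ (g z.2)]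
      ring
    _ ≤ (∫⁻ z, f z.1 ^ r * g z.2 ^ p ∂μ.prod ν) ^ θ *
          (∫⁻ z, f z.1 ^ r * K₁ z ∂μ.prod ν) ^ (1 - 1 / p) *
          (∫⁻ z, g z.2 ^ p * K₂ z ∂μ.prod ν) ^ (1 - 1 / r) :=
      lintegral_mul_mul_rpow_le (by fun_prop) (by fun_prop) (by fun_prop) hθ hp1 hr1
        (by simp only [θ]; ring)
    _ ≤ (I * J) ^ θ * (I * A) ^ (1 - 1 / p) * (J * A) ^ (1 - 1 / r) := by
      rw [lintegral_prod_mul (hf.pow_const r).aemeasurable (hg.pow_const p).aemeasurable]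
      gcongr
    _ = A ^ (1 - 1 / p) * A ^ (1 - 1 / r) * (I ^ θ * I ^ (1 - 1 / p)) *
          (J ^ θ * J ^ (1 - 1 / r)) := by
      simp only [ENNReal.mul_rpow_of_nonneg _ _ hθ, ENNReal.mul_rpow_of_nonneg _ _ hp1,
        ENNReal.mul_rpow_of_nonneg _ _ hr1]
      ring
    _ = _ := by
      rw [← ENNReal.rpow_add_of_nonneg _ _ hθ hp1, ← ENNReal.rpow_add_of_nonneg _ _ hθ hr1,
        ENNReal.coe_mul, ENNReal.coe_rpow_of_nonneg _ hp1, ENNReal.coe_rpow_of_nonneg _ hr1,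
        show θ + (1 - 1 / p) = 1 / r by simp only [θ]; ring,
        show θ + (1 - 1 / r) = 1 / p by simp only [θ]; ring]

theorem exists_lintegral_prod_le [SFinite ν] (h : IsBoundedForm r p μ ν K) :
    ∃ C : ℝ≥0, ∀ (f : α → ℝ≥0∞) (g : β → ℝ≥0∞), AEMeasurable f μ → AEMeasurable g ν →
      ∫⁻ z, f z.1 * K z * g z.2 ∂μ.prod ν ≤
        C * (∫⁻ x, f x ^ r ∂μ) ^ (1 / r) * (∫⁻ y, g y ^ p ∂ν) ^ (1 / p) := by
  obtain ⟨C, hC⟩ := h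
  refine ⟨C, fun f g hf hg ↦ ?_⟩
  have hI : ∫⁻ x, f x ^ r ∂μ = ∫⁻ x, hf.mk f x ^ r ∂μ :=
    lintegral_congr_ae (hf.ae_eq_mk.fun_comp (· ^ r))
  have hJ : ∫⁻ y, g y ^ p ∂ν = ∫⁻ y, hg.mk g y ^ p ∂ν :=
    lintegral_congr_ae (hg.ae_eq_mk.fun_comp (· ^ p))
  rw [hI, hJ]
  refine le_of_eq_of_le (lintegral_congr_ae ?_) (hC _ _ hf.measurable_mk hg.measurable_mk)
  filter_upwards [Measure.quasiMeasurePreserving_fst.ae hf.ae_eq_mk,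
    Measure.quasiMeasurePreserving_snd.ae hg.ae_eq_mk] with z hz₁ hz₂
  rw [hz₁, hz₂]

theorem exists_lintegral_rpow_le [SFinite ν] (h : IsBoundedForm r p μ ν K) (hK : Measurable K)
    (hrq : r.HolderConjugate q) :
    ∃ C : ℝ≥0, ∀ (u : α → ℝ≥0∞) (g : β → ℝ≥0∞), AEMeasurable u μ → AEMeasurable g ν →
      ∫⁻ x, u x ^ q ∂μ ≠ ⊤ → (∀ᵐ x ∂μ, u x ≤ ∫⁻ y, K (x, y) * g y ∂ν) →
      (∫⁻ x, u x ^ q ∂μ) ^ (1 / q) ≤ C * (∫⁻ y, g y ^ p ∂ν) ^ (1 / p) := by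
  obtain ⟨C, hC⟩ := h.exists_lintegral_prod_le
  refine ⟨C, fun u g hu hg hfin hle ↦ ?_⟩
  set I := ∫⁻ x, u x ^ q ∂μ
  set G := (∫⁻ y, g y ^ p ∂ν) ^ (1 / p)
  have hself : I ≤ I ^ (1 / r) * (C * G) := calc
    I = ∫⁻ x, u x ^ (q - 1) * u x ∂μ := by
      refine lintegral_congr fun x ↦ ?_
      conv_rhs => enter [2]; rw [← ENNReal.rpow_one (u x)]
      rw [← ENNReal.rpow_add_of_nonneg _ _ hrq.symm.sub_one_pos.le zero_le_one, sub_add_cancel]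
    _ ≤ ∫⁻ x, ∫⁻ y, u x ^ (q - 1) * K (x, y) * g y ∂ν ∂μ := by
      refine lintegral_mono_ae (hle.mono fun x hx ↦ ?_)
      simp only [mul_assoc]
      rw [lintegral_const_mul'' _ (by fun_prop)]
      gcongr
    _ = ∫⁻ z, u z.1 ^ (q - 1) * K z * g z.2 ∂μ.prod ν := by
      rw [lintegral_prod _ (by fun_prop)]
    _ ≤ C * (∫⁻ x, (u x ^ (q - 1)) ^ r ∂μ) ^ (1 / r) * G := hC _ _ (by fun_prop) hg
    _ = I ^ (1 / r) * (C * G) := by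
      simp only [← ENNReal.rpow_mul, hrq.symm.sub_one_mul_conj]
      ring
  rcases eq_or_ne I 0 with hI | hI
  · simp [hI, hrq.symm.pos]
  have hI' : I ^ (1 / q) = I / I ^ (1 / r) := by
    rw [one_div, one_div, ← hrq.one_sub_inv, ENNReal.rpow_sub _ _ hI hfin, ENNReal.rpow_one]
  rw [hI']
  exact ENNReal.div_le_of_le_mul' hself

end IsBoundedForm

end BoundedForm

section PowerComparison

theorem ennreal_rpow_le_rpow_of_nonpos {x y : ℝ≥0∞} {s : ℝ} (h : x ≤ y) (hs : s ≤ 0) :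
    y ^ s ≤ x ^ s := by
  rw [← neg_neg s, ENNReal.rpow_neg, ENNReal.rpow_neg x, ENNReal.inv_le_inv]
  exact ENNReal.rpow_le_rpow h (neg_nonneg.2 hs)

theorem ennreal_rpow_le_of_le_mul {c x y : ℝ≥0∞} {s : ℝ} (hc : c ≠ 0) (hc' : c ≠ ⊤) (hy : y ≠ ⊤)
    (h : x ≤ c * y) (hs : s ≤ 0) : y ^ s ≤ c ^ (-s) * x ^ s := by
  calc
    y ^ s = c ^ (-s) * (c * y) ^ s := by
      rw [ENNReal.mul_rpow_of_ne_top hc' hy, ← mul_assoc, ← ENNReal.rpow_add _ _ hc hc',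
        neg_add_cancel, ENNReal.rpow_zero, one_mul]
    _ ≤ c ^ (-s) * x ^ s := by grw [ennreal_rpow_le_rpow_of_nonpos h hs]

theorem ennreal_rpow_le_of_comparable {c x y : ℝ≥0∞} (hc : 1 ≤ c) (hc' : c ≠ ⊤) (hy : y ≠ ⊤)
    (hxy : x ≤ c * y) (hyx : y ≤ c * x) (s : ℝ) : y ^ s ≤ c ^ |s| * x ^ s := by
  rcases le_total s 0 with hs | hs
  · rw [abs_of_nonpos hs]
    exact ennreal_rpow_le_of_le_mul (one_pos.trans_le hc).ne' hc' hy hxy hs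
  · rw [abs_of_nonneg hs, ← ENNReal.mul_rpow_of_nonneg _ _ hs]
    exact ENNReal.rpow_le_rpow hyx hs

theorem enorm_sub_le_three_mul {E : Type*} [NormedAddCommGroup E] {x y : E}
    (h : ‖y‖ₑ ≤ 2 * ‖x‖ₑ) : ‖x - y‖ₑ ≤ 3 * ‖x‖ₑ := by
  grw [enorm_sub_le, h]
  exact le_of_eq (by ring)

theorem ae_prod_ne_zero_and_ne {E : Type*} [AddGroup E] [MeasurableSpace E]
    [MeasurableSub₂ E] [MeasurableSingletonClass E] (μ : Measure E) [SFinite μ]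
    [NullSingletonClass μ] :
    ∀ᵐ z ∂μ.prod μ, z.1 ≠ 0 ∧ z.2 ≠ 0 ∧ z.1 ≠ z.2 := by
  have hdiag : ∀ᵐ z ∂μ.prod μ, z.1 ≠ z.2 := by
    have hmeas : MeasurableSet {z : E × E | z.1 - z.2 ∈ ({0} : Set E)ᶜ} :=
      (measurableSet_singleton 0).compl.preimage (measurable_fst.sub measurable_snd)
    simp only [mem_compl_iff, mem_singleton_iff, sub_eq_zero] at hmeas
    exact (Measure.ae_prod_iff_ae_ae hmeas).2
      (ae_of_all _ fun x ↦ (Measure.ae_ne μ x).mono fun y hy ↦ hy.symm)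
  filter_upwards [Measure.quasiMeasurePreserving_fst.ae (Measure.ae_ne μ 0),
    Measure.quasiMeasurePreserving_snd.ae (Measure.ae_ne μ 0), hdiag] with z h₁ h₂ h₃
  exact ⟨h₁, h₂, h₃⟩

end PowerComparison

section Hardy

variable {E : Type*} [NormedAddCommGroup E]

/-- The kernel `|x|^γ |y|^δ` of Hardy type, supported on the region `|y| ≤ |x|`. -/
noncomputable def hardyKernel (γ δ : ℝ) : E × E → ℝ≥0∞ :=
  {z : E × E | ‖z.2‖ₑ ≤ ‖z.1‖ₑ}.indicator fun z ↦ ‖z.1‖ₑ ^ γ * ‖z.2‖ₑ ^ δ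

theorem measurable_hardyKernel [MeasurableSpace E] [BorelSpace E] [SecondCountableTopology E]
    (γ δ : ℝ) : Measurable (hardyKernel γ δ : E × E → ℝ≥0∞) :=
  .indicator (by fun_prop) (measurableSet_le measurable_snd.enorm measurable_fst.enorm)

variable [NormedSpace ℝ E] [MeasurableSpace E] [BorelSpace E] [FiniteDimensional ℝ E]
  [Nontrivial E] (μ : Measure E) [μ.IsAddHaarMeasure]
  {r p β γ : ℝ}

theorem exists_lintegral_hardyKernel_snd_le {s : ℝ} (hs : -dim E < s) :
    ∃ C : ℝ≥0, ∀ᵐ x ∂μ, ∫⁻ y, hardyKernel (-s - dim E) s (x, y) ∂μ ≤ C := by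
  obtain ⟨C, hC⟩ := exists_setLIntegral_enorm_sub_rpow_le μ hs
  refine ⟨C, (Measure.ae_ne μ 0).mono fun x hx ↦ ?_⟩
  have hx' : ‖x‖ₑ ≠ 0 := enorm_ne_zero.2 hx
  calc
    _ = ∫⁻ y in {y | ‖y‖ₑ ≤ ‖x‖ₑ}, ‖x‖ₑ ^ (-s - dim E) * ‖y‖ₑ ^ s ∂μ :=
      lintegral_indicator (measurableSet_le measurable_enorm measurable_const) _
    _ = ‖x‖ₑ ^ (-s - dim E) * ∫⁻ y in {y | ‖y‖ₑ ≤ ‖x‖ₑ}, ‖y‖ₑ ^ s ∂μ :=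
      lintegral_const_mul _ (by fun_prop)
    _ ≤ ‖x‖ₑ ^ (-s - dim E) * (C * ‖x‖ₑ ^ (s + dim E)) := by
      grw [← hC 0 _ hx' enorm_ne_top]
      simp
    _ = C := by
      rw [mul_left_comm, ← ENNReal.rpow_add _ _ hx' enorm_ne_top]
      simp

theorem exists_lintegral_hardyKernel_fst_le {s : ℝ} (hs : s < -dim E) :
    ∃ C : ℝ≥0, ∀ᵐ y ∂μ, ∫⁻ x, hardyKernel s (-s - dim E) (x, y) ∂μ ≤ C := by
  obtain ⟨C, hC⟩ := exists_setLIntegral_le_enorm_sub_rpow_le μ hs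
  refine ⟨C, (Measure.ae_ne μ 0).mono fun y hy ↦ ?_⟩
  have hy' : ‖y‖ₑ ≠ 0 := enorm_ne_zero.2 hy
  calc
    _ = ∫⁻ x in {x | ‖y‖ₑ ≤ ‖x‖ₑ}, ‖x‖ₑ ^ s * ‖y‖ₑ ^ (-s - dim E) ∂μ :=
      lintegral_indicator (measurableSet_le measurable_const measurable_enorm) _
    _ = (∫⁻ x in {x | ‖y‖ₑ ≤ ‖x‖ₑ}, ‖x‖ₑ ^ s ∂μ) * ‖y‖ₑ ^ (-s - dim E) :=
      lintegral_mul_const _ (by fun_prop)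
    _ ≤ C * ‖y‖ₑ ^ (s + dim E) * ‖y‖ₑ ^ (-s - dim E) := by
      grw [← hC 0 _ hy' enorm_ne_top]
      simp
    _ = C := by
      rw [mul_assoc, ← ENNReal.rpow_add _ _ hy' enorm_ne_top]
      simp

theorem isBoundedForm_hardyKernel (hr : 1 < r) (hp : 1 < p) (hrp : 1 ≤ 1 / p + 1 / r)
    (hβ : β < dim E * (1 - 1 / p)) (hγ : γ = β - dim E * (1 - 1 / p) - dim E * (1 - 1 / r)) :
    IsBoundedForm r p μ μ (hardyKernel γ (-β)) := by
  have hp1 : 0 < 1 - 1 / p := sub_pos.2 ((div_lt_one (by linarith)).2 hp)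
  have hr1 : 0 < 1 - 1 / r := sub_pos.2 ((div_lt_one (by linarith)).2 hr)
  obtain ⟨s, hs, hst⟩ : ∃ s > 0, β + s * (1 - 1 / r) < dim E * (1 - 1 / p) :=
    ⟨(dim E * (1 - 1 / p) - β) / (2 * (1 - 1 / r)), div_pos (by linarith) (by linarith), by
      rw [div_mul_eq_mul_div, mul_div_mul_right _ _ hr1.ne']; linarith⟩
  obtain ⟨t, ht⟩ : ∃ t, t * (1 - 1 / p) = β + s * (1 - 1 / r) := ⟨_, div_mul_cancel₀ _ hp1.ne'⟩
  have htn : t < dim E := lt_of_mul_lt_mul_right (ht.trans_lt hst) hp1.le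
  obtain ⟨C₁, hC₁⟩ := exists_lintegral_hardyKernel_snd_le μ (s := -t) (by linarith)
  obtain ⟨C₂, hC₂⟩ := exists_lintegral_hardyKernel_fst_le μ (s := -s - dim E) (by linarith)
  refine (IsBoundedForm.schur hr.le hp.le hrp (A := max C₁ C₂)
    (measurable_hardyKernel _ _) (measurable_hardyKernel _ _)
    (hC₁.mono fun x hx ↦ hx.trans (by simp)) (hC₂.mono fun y hy ↦ hy.trans (by simp))).mono
    ENNReal.one_ne_top ((ae_prod_ne_zero_and_ne μ).mono fun z ⟨hz₁, hz₂, _⟩ ↦ ?_)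
  by_cases hz : ‖z.2‖ₑ ≤ ‖z.1‖ₑ
  · simp only [hardyKernel, indicator, mem_ofPred_eq, hz, if_true, one_mul,
      ENNReal.mul_rpow_of_nonneg _ _ hp1.le, ENNReal.mul_rpow_of_nonneg _ _ hr1.le,
      ← ENNReal.rpow_mul]
    rw [mul_mul_mul_comm, ← ENNReal.rpow_add _ _ (enorm_ne_zero.2 hz₁) enorm_ne_top,
      ← ENNReal.rpow_add _ _ (enorm_ne_zero.2 hz₂) enorm_ne_top]
    refine le_of_eq ?_
    congr 2
    · linear_combination hγ - ht
    · linear_combination ht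
  · simp [hardyKernel, indicator, hz]

end Hardy

section HardyLittlewoodSobolev

variable {E : Type*} [NormedAddCommGroup E] [NormedSpace ℝ E] [MeasurableSpace E] [BorelSpace E]
  [FiniteDimensional ℝ E] (μ : Measure E) [μ.IsAddHaarMeasure] {r p s θ : ℝ}

theorem exists_setLIntegral_le_enorm_sub_rpow_mul_le (hp : 1 < p)
    (hs : s < -(dim E * (1 - 1 / p))) :
    ∃ C : ℝ≥0, ∀ (g : E → ℝ≥0∞) (c : E) (ρ : ℝ≥0∞), Measurable g → ρ ≠ 0 → ρ ≠ ⊤ →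
      ∫⁻ x in {x | ρ ≤ ‖x - c‖ₑ}, ‖x - c‖ₑ ^ s * g x ∂μ ≤
        C * ρ ^ (s + dim E * (1 - 1 / p)) * (∫⁻ x, g x ^ p ∂μ) ^ (1 / p) := by
  obtain ⟨p', hpp'⟩ : ∃ p', p.HolderConjugate p' := ⟨_, .conjExponent hp⟩
  have hp'_inv : 1 / p' = 1 - 1 / p := by simp [← hpp'.one_sub_inv]
  have hsp' : s * p' < -dim E := by
    have : p' * (1 / p') = 1 := mul_one_div_cancel hpp'.symm.ne_zero
    rw [← hp'_inv] at hs
    nlinarith [mul_lt_mul_of_pos_right hs hpp'.symm.pos]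
  obtain ⟨C, hC⟩ := exists_setLIntegral_le_enorm_sub_rpow_le μ hsp'
  refine ⟨C ^ (1 / p'), fun g c ρ hg hρ hρ' ↦ ?_⟩
  calc
    _ ≤ (∫⁻ x in {x | ρ ≤ ‖x - c‖ₑ}, (‖x - c‖ₑ ^ s) ^ p' ∂μ) ^ (1 / p') *
          (∫⁻ x in {x | ρ ≤ ‖x - c‖ₑ}, g x ^ p ∂μ) ^ (1 / p) :=
      ENNReal.lintegral_mul_le_Lp_mul_Lq _ hpp'.symm (by fun_prop) hg.aemeasurable
    _ ≤ (C * ρ ^ (s * p' + dim E)) ^ (1 / p') * (∫⁻ x, g x ^ p ∂μ) ^ (1 / p) := by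
      have := hpp'.one_div_nonneg
      have hp0' := hpp'.symm.one_div_nonneg
      simp_rw [← ENNReal.rpow_mul]
      gcongr
      · exact hC c ρ hρ hρ'
      · exact Measure.restrict_le_self
    _ = _ := by
      rw [ENNReal.mul_rpow_of_nonneg _ _ hpp'.symm.one_div_nonneg, ← ENNReal.rpow_mul,
        ENNReal.coe_rpow_of_nonneg _ hpp'.symm.one_div_nonneg, add_mul, mul_assoc s,
        mul_one_div_cancel hpp'.symm.ne_zero, mul_one, hp'_inv]

variable [Nontrivial E]

/-- Hedberg's trick: the integral is split at the radius `M ^ (-p / n)`, which balances the bound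
`g ≤ M` near `x` against Hölder's inequality away from `x`. -/
theorem exists_setLIntegral_enorm_sub_rpow_mul_le (hp : 1 < p) (hθ : 0 < θ) (hθp : θ < 1 / p) :
    ∃ C : ℝ≥0, ∀ (g : E → ℝ≥0∞) (x : E) (M : ℝ≥0∞), Measurable g → ∫⁻ y, g y ^ p ∂μ ≤ 1 →
      M ≠ 0 → M ≠ ⊤ →
      ∫⁻ y in {y | g y ≤ M}, ‖x - y‖ₑ ^ (dim E * θ - dim E) * g y ∂μ ≤ C * M ^ (1 - p * θ) := by
  have hn : 0 < (dim E : ℝ) := Nat.cast_pos.2 Module.finrank_pos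
  set s : ℝ := dim E * θ - dim E with hs
  obtain ⟨C₁, hC₁⟩ := exists_setLIntegral_enorm_sub_rpow_le μ (s := s) (by nlinarith)
  obtain ⟨C₂, hC₂⟩ := exists_setLIntegral_le_enorm_sub_rpow_mul_le μ (s := s) hp (by nlinarith)
  refine ⟨C₁ + C₂, fun g x M hg hg1 hM hM' ↦ ?_⟩
  set R := M ^ (-p / dim E) with hR
  have hR0 : R ≠ 0 := (ENNReal.rpow_pos (pos_iff_ne_zero.2 hM) hM').ne'
  have hR' : R ≠ ⊤ := ENNReal.rpow_ne_top_of_ne_zero hM hM'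
  have hnear : ∫⁻ y in {y | ‖y - x‖ₑ ≤ R} ∩ {y | g y ≤ M}, ‖y - x‖ₑ ^ s * g y ∂μ ≤
      C₁ * M ^ (1 - p * θ) := calc
    _ ≤ ∫⁻ y in {y | ‖y - x‖ₑ ≤ R} ∩ {y | g y ≤ M}, ‖y - x‖ₑ ^ s * M ∂μ :=
      setLIntegral_mono (by fun_prop) fun y hy ↦ mul_le_mul_right hy.2 _
    _ ≤ ∫⁻ y in {y | ‖y - x‖ₑ ≤ R}, ‖y - x‖ₑ ^ s * M ∂μ := lintegral_mono_set inter_subset_left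
    _ ≤ C₁ * R ^ (s + dim E) * M := by
      rw [lintegral_mul_const' _ _ hM']
      grw [hC₁ x R hR0 hR']
    _ = C₁ * M ^ (1 - p * θ) := by
      conv_lhs => enter [2]; rw [← ENNReal.rpow_one M]
      rw [mul_assoc, hR, ← ENNReal.rpow_mul, ← ENNReal.rpow_add _ _ hM hM', hs]
      congr 2
      field_simp
      ring
  have hfar : ∫⁻ y in {y | R ≤ ‖y - x‖ₑ}, ‖y - x‖ₑ ^ s * g y ∂μ ≤ C₂ * M ^ (1 - p * θ) := calc
    _ ≤ C₂ * R ^ (s + dim E * (1 - 1 / p)) * 1 := by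
      grw [hC₂ g x R hg hR0 hR', ENNReal.rpow_le_one hg1 (by positivity)]
    _ = C₂ * M ^ (1 - p * θ) := by
      rw [mul_one, hR, ← ENNReal.rpow_mul, hs]
      congr 2
      field_simp
      ring
  simp_rw [enorm_sub_rev x]
  calc
    _ ≤ ∫⁻ y in {y | ‖y - x‖ₑ ≤ R} ∩ {y | g y ≤ M} ∪ {y | R ≤ ‖y - x‖ₑ},
          ‖y - x‖ₑ ^ s * g y ∂μ :=
      lintegral_mono_set fun y hy ↦ (le_total ‖y - x‖ₑ R).imp (⟨·, hy⟩) id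
    _ ≤ _ := lintegral_union_le _ _ _
    _ ≤ (C₁ + C₂ : ℝ≥0) * M ^ (1 - p * θ) := by
      grw [hnear, hfar, ENNReal.coe_add, add_mul]

theorem exists_setLIntegral_mul_enorm_sub_rpow_mul_le (hr : 1 < r) (hp : 1 < p) (hθ : 0 < θ)
    (hrp : 1 / p + 1 / r = 1 + θ) :
    ∃ C : ℝ≥0, ∀ (g : E → ℝ≥0∞) (x : E) (t : ℝ≥0∞), Measurable g → ∫⁻ y, g y ^ p ∂μ ≤ 1 →
      t ≠ ⊤ → ∫⁻ y in {y | g y ^ p ≤ t ^ r}, t * ‖x - y‖ₑ ^ (dim E * θ - dim E) * g y ∂μ ≤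
        C * t ^ r := by
  have hp0 : 0 < p := by linarith
  have hr0 : 0 < r := by linarith
  have hexp : 1 + r / p * (1 - p * θ) = r := by
    field_simp at hrp ⊢
    linear_combination hrp
  obtain ⟨C, hC⟩ := exists_setLIntegral_enorm_sub_rpow_mul_le μ hp hθ
    (by linarith [(div_lt_one hr0).2 hr])
  refine ⟨C, fun g x t hg hg1 ht' ↦ ?_⟩
  rcases eq_or_ne t 0 with rfl | ht
  · simp
  have hlevel (y : E) : g y ^ p ≤ t ^ r ↔ g y ≤ t ^ (r / p) := by
    rw [div_eq_mul_inv, ENNReal.rpow_mul, ENNReal.le_rpow_inv_iff hp0]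
  have hM : t ^ (r / p) ≠ 0 := (ENNReal.rpow_pos (pos_iff_ne_zero.2 ht) ht').ne'
  have hM' : t ^ (r / p) ≠ ⊤ := ENNReal.rpow_ne_top_of_ne_zero ht ht'
  calc
    _ = t * ∫⁻ y in {y | g y ≤ t ^ (r / p)}, ‖x - y‖ₑ ^ (dim E * θ - dim E) * g y ∂μ := by
      simp only [hlevel, mul_assoc]
      exact lintegral_const_mul' _ _ ht'
    _ ≤ t * (C * (t ^ (r / p)) ^ (1 - p * θ)) := mul_le_mul_right (hC g x _ hg hg1 hM hM') _
    _ = C * t ^ r := by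
      conv_lhs => enter [1]; rw [← ENNReal.rpow_one t]
      rw [mul_left_comm, ← ENNReal.rpow_mul, ← ENNReal.rpow_add _ _ ht ht', hexp]

theorem exists_lintegral_indicator_enorm_sub_rpow_le (hr : 1 < r) (hp : 1 < p) (hθ : 0 < θ)
    (hrp : 1 / p + 1 / r = 1 + θ) :
    ∃ C : ℝ≥0, ∀ f g : E → ℝ≥0∞, Measurable f → Measurable g →
      ∫⁻ x, f x ^ r ∂μ ≤ 1 → ∫⁻ y, g y ^ p ∂μ ≤ 1 →
      ∫⁻ z, {z : E × E | g z.2 ^ p ≤ f z.1 ^ r}.indicator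
        (fun z ↦ f z.1 * ‖z.1 - z.2‖ₑ ^ (dim E * θ - dim E) * g z.2) z ∂μ.prod μ ≤ C := by
  obtain ⟨C, hC⟩ := exists_setLIntegral_mul_enorm_sub_rpow_mul_le μ hr hp hθ hrp
  refine ⟨C, fun f g hf hg hf1 hg1 ↦ ?_⟩
  have hft : ∀ᵐ x ∂μ, f x ≠ ⊤ :=
    (ae_lt_top (hf.pow_const r) (hf1.trans_lt ENNReal.one_lt_top).ne).mono fun x hx ↦
      ((ENNReal.rpow_lt_top_iff_of_pos (by linarith)).1 hx).ne
  calc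
    _ = ∫⁻ x, ∫⁻ y in {y | g y ^ p ≤ f x ^ r},
          f x * ‖x - y‖ₑ ^ (dim E * θ - dim E) * g y ∂μ ∂μ := by
      rw [lintegral_prod _ (Measurable.indicator (by fun_prop)
        (measurableSet_le (by fun_prop) (by fun_prop))).aemeasurable]
      refine lintegral_congr fun x ↦ ?_
      rw [← lintegral_indicator (measurableSet_le (hg.pow_const p) measurable_const)]
      rfl
    _ ≤ ∫⁻ x, C * f x ^ r ∂μ := lintegral_mono_ae (hft.mono fun x hx ↦ hC g x _ hg hg1 hx)
    _ ≤ C * 1 := by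
      rw [lintegral_const_mul' _ _ ENNReal.coe_ne_top]
      grw [hf1]
    _ = C := mul_one _

theorem isBoundedForm_enorm_sub_rpow (hr : 1 < r) (hp : 1 < p) (hθ : 0 < θ)
    (hrp : 1 / p + 1 / r = 1 + θ) :
    IsBoundedForm r p μ μ fun z ↦ ‖z.1 - z.2‖ₑ ^ (dim E * θ - dim E) := by
  obtain ⟨C₁, hC₁⟩ := exists_lintegral_indicator_enorm_sub_rpow_le μ hr hp hθ hrp
  obtain ⟨C₂, hC₂⟩ :=
    exists_lintegral_indicator_enorm_sub_rpow_le μ hp hr hθ (by rw [add_comm, hrp])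
  refine .of_unit (by linarith) (by linarith) ⟨C₁ + C₂, fun f g hf hg hf1 hg1 ↦ ?_⟩
  set F : E × E → ℝ≥0∞ := fun z ↦ f z.1 * ‖z.1 - z.2‖ₑ ^ (dim E * θ - dim E) * g z.2
  set S : Set (E × E) := {z | g z.2 ^ p ≤ f z.1 ^ r}
  set T : Set (E × E) := {z | f z.1 ^ r ≤ g z.2 ^ p}
  have hS : MeasurableSet S := measurableSet_le (by fun_prop) (by fun_prop)
  calc
    _ ≤ ∫⁻ z, S.indicator F z + T.indicator F z ∂μ.prod μ := by
      refine lintegral_mono fun z ↦ ?_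
      rcases le_total (g z.2 ^ p) (f z.1 ^ r) with hz | hz
      · exact (indicator_of_mem (s := S) hz F).symm.trans_le le_self_add
      · exact (indicator_of_mem (s := T) hz F).symm.trans_le le_add_self
    _ = ∫⁻ z, S.indicator F z ∂μ.prod μ + ∫⁻ z, T.indicator F z ∂μ.prod μ :=
      lintegral_add_left (.indicator (by fun_prop) hS) _
    _ ≤ C₁ + C₂ := by
      refine add_le_add (hC₁ f g hf hg hf1 hg1) ?_
      rw [← lintegral_prod_swap]
      refine (lintegral_congr fun z ↦ ?_).trans_le (hC₂ g f hg hf hg1 hf1)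
      simp only [T, F, indicator, mem_ofPred_eq, Prod.fst_swap, Prod.snd_swap, enorm_sub_rev z.2,
        mul_comm, mul_left_comm]

end HardyLittlewoodSobolev

section SteinWeiss

variable {E : Type*} [NormedAddCommGroup E] [NormedSpace ℝ E]

/-- The Riesz kernel `|x|^(-σ) |x - y|^(σ - n)`, normalised to be homogeneous of degree `-n`
(`n` the dimension) and cut off to the region `|x - y| ≤ 3|x|`. -/
noncomputable def localRieszKernel (σ : ℝ) : E × E → ℝ≥0∞ :=
  {z : E × E | ‖z.1 - z.2‖ₑ ≤ 3 * ‖z.1‖ₑ}.indicator fun z ↦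
    ‖z.1‖ₑ ^ (-σ) * ‖z.1 - z.2‖ₑ ^ (σ - dim E)

/-- The Stein–Weiss kernel `|x|^(-α) |x - y|^(σ - n) |y|^(-β)`, i.e. the kernel of the Riesz
potential of order `σ` in dimension `n` between spaces with power weights. -/
noncomputable def steinWeissKernel (α β σ : ℝ) : E × E → ℝ≥0∞ :=
  fun z ↦ ‖z.1‖ₑ ^ (-α) * ‖z.1 - z.2‖ₑ ^ (σ - dim E) * ‖z.2‖ₑ ^ (-β)

variable {r p α β σ : ℝ}

theorem steinWeissKernel_le_of_comparable {z : E × E} (h₁ : z.1 ≠ 0) (h₂ : z.2 ≠ 0)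
    (h₁₂ : ‖z.1‖ₑ ≤ 2 * ‖z.2‖ₑ) (h₂₁ : ‖z.2‖ₑ ≤ 2 * ‖z.1‖ₑ) (s : ℝ) :
    steinWeissKernel α β σ z ≤ 2 ^ |s - β| * steinWeissKernel (α + β - s) s σ z := by
  have h₂' := enorm_ne_zero.2 h₂
  calc
    _ = ‖z.1‖ₑ ^ (-α) * ‖z.1 - z.2‖ₑ ^ (σ - dim E) * (‖z.2‖ₑ ^ (s - β) * ‖z.2‖ₑ ^ (-s)) := by
      rw [← ENNReal.rpow_add _ _ h₂' enorm_ne_top, steinWeissKernel]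
      ring_nf
    _ ≤ ‖z.1‖ₑ ^ (-α) * ‖z.1 - z.2‖ₑ ^ (σ - dim E) *
          (2 ^ |s - β| * ‖z.1‖ₑ ^ (s - β) * ‖z.2‖ₑ ^ (-s)) := by
      grw [ennreal_rpow_le_of_comparable one_le_two ENNReal.ofNat_ne_top enorm_ne_top h₁₂ h₂₁]
    _ = _ := by
      rw [steinWeissKernel, show -(α + β - s) = -α + (s - β) by ring,
        ENNReal.rpow_add _ _ (enorm_ne_zero.2 h₁) enorm_ne_top]
      ring

theorem steinWeissKernel_le_localRieszKernel_mul {z : E × E} (h₁ : z.1 ≠ 0) (h₂ : z.2 ≠ 0)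
    (hne : z.1 ≠ z.2) (h₁₂ : ‖z.1‖ₑ ≤ 2 * ‖z.2‖ₑ) (h₂₁ : ‖z.2‖ₑ ≤ 2 * ‖z.1‖ₑ) {s t : ℝ}
    (hs : 0 ≤ s) (ht : 0 ≤ t) (hst : s + t = 1) (hσ : α + β = σ) :
    steinWeissKernel α β σ z ≤
      2 ^ |σ * t - β| * (localRieszKernel σ z ^ s * localRieszKernel σ z.swap ^ t) := by
  grw [steinWeissKernel_le_of_comparable h₁ h₂ h₁₂ h₂₁ (σ * t)]
  refine le_of_eq (congrArg _ ?_)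
  have hz : ‖z.1 - z.2‖ₑ ≠ 0 := enorm_ne_zero.2 (sub_ne_zero.2 hne)
  have hx := enorm_sub_le_three_mul h₂₁
  have hy := enorm_sub_le_three_mul h₁₂
  rw [enorm_sub_rev] at hy
  simp only [steinWeissKernel, localRieszKernel, indicator, Prod.fst_swap, Prod.snd_swap,
    mem_ofPred_eq, enorm_sub_rev z.2, hx, hy, if_true, ENNReal.mul_rpow_of_nonneg _ _ hs,
    ENNReal.mul_rpow_of_nonneg _ _ ht, ← ENNReal.rpow_mul]
  rw [mul_mul_mul_comm, ← ENNReal.rpow_add _ _ hz enorm_ne_top, ← mul_add, hst, mul_one,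
    mul_right_comm, hσ, show -(σ - σ * t) = -σ * s by linear_combination σ * hst,
    neg_mul σ t]

theorem steinWeissKernel_le_enorm_sub_rpow {z : E × E} (h₁ : z.1 ≠ 0) (h₂ : z.2 ≠ 0)
    (hne : z.1 ≠ z.2) (h₁₂ : ‖z.1‖ₑ ≤ 2 * ‖z.2‖ₑ) (h₂₁ : ‖z.2‖ₑ ≤ 2 * ‖z.1‖ₑ) {s : ℝ}
    (hαβ : 0 ≤ α + β) (hs : s + (α + β) = σ - dim E) :
    steinWeissKernel α β σ z ≤ 2 ^ |0 - β| * 3 ^ (α + β) * ‖z.1 - z.2‖ₑ ^ s := by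
  have h₁' : ‖z.1‖ₑ ≠ 0 := enorm_ne_zero.2 h₁
  have hz : ‖z.1 - z.2‖ₑ ≠ 0 := enorm_ne_zero.2 (sub_ne_zero.2 hne)
  grw [steinWeissKernel_le_of_comparable h₁ h₂ h₁₂ h₂₁ 0, mul_assoc]
  gcongr
  calc
    _ = ‖z.1‖ₑ ^ (-(α + β)) * (‖z.1 - z.2‖ₑ ^ s * ‖z.1 - z.2‖ₑ ^ (α + β)) := by
      rw [← ENNReal.rpow_add _ _ hz enorm_ne_top, hs]
      simp [steinWeissKernel]
    _ ≤ ‖z.1‖ₑ ^ (-(α + β)) * (‖z.1 - z.2‖ₑ ^ s * (3 * ‖z.1‖ₑ) ^ (α + β)) :=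
      mul_le_mul_right (mul_le_mul_right
        (ENNReal.rpow_le_rpow (enorm_sub_le_three_mul h₂₁) hαβ) _) _
    _ = 3 ^ (α + β) * ‖z.1 - z.2‖ₑ ^ s * ‖z.1‖ₑ ^ (-(α + β) + (α + β)) := by
      rw [ENNReal.rpow_add (-(α + β)) (α + β) h₁' enorm_ne_top, ENNReal.mul_rpow_of_nonneg _ _ hαβ]
      ac_rfl
    _ = _ := by rw [neg_add_cancel, ENNReal.rpow_zero, mul_one]

variable [MeasurableSpace E] [BorelSpace E] [FiniteDimensional ℝ E]

theorem measurable_localRieszKernel (σ : ℝ) :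
    Measurable (localRieszKernel σ : E × E → ℝ≥0∞) :=
  .indicator (by fun_prop) (measurableSet_le (by fun_prop) (by fun_prop))

theorem measurable_steinWeissKernel (α β σ : ℝ) :
    Measurable (steinWeissKernel α β σ : E × E → ℝ≥0∞) := by
  unfold steinWeissKernel
  fun_prop

variable [Nontrivial E] (μ : Measure E) [μ.IsAddHaarMeasure]

theorem exists_lintegral_localRieszKernel_le (hσ : 0 < σ) :
    ∃ C : ℝ≥0, ∀ᵐ x ∂μ, ∫⁻ y, localRieszKernel σ (x, y) ∂μ ≤ C := by
  obtain ⟨C, hC⟩ := exists_setLIntegral_enorm_sub_rpow_le μ (s := σ - dim E) (by linarith)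
  refine ⟨C * 3 ^ σ, (Measure.ae_ne μ 0).mono fun x hx ↦ ?_⟩
  have hx' : ‖x‖ₑ ≠ 0 := enorm_ne_zero.2 hx
  calc
    _ = ∫⁻ y in {y | ‖x - y‖ₑ ≤ 3 * ‖x‖ₑ}, ‖x‖ₑ ^ (-σ) * ‖x - y‖ₑ ^ (σ - dim E) ∂μ :=
      lintegral_indicator (measurableSet_le (by fun_prop) measurable_const) _
    _ = ‖x‖ₑ ^ (-σ) * ∫⁻ y in {y | ‖y - x‖ₑ ≤ 3 * ‖x‖ₑ}, ‖y - x‖ₑ ^ (σ - dim E) ∂μ := by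
      simp_rw [enorm_sub_rev x]
      exact lintegral_const_mul _ (by fun_prop)
    _ ≤ ‖x‖ₑ ^ (-σ) * (C * (3 * ‖x‖ₑ) ^ σ) := by
      grw [hC x (3 * ‖x‖ₑ) (by simp [hx']) (by finiteness), sub_add_cancel]
    _ = C * 3 ^ σ * ‖x‖ₑ ^ (-σ + σ) := by
      rw [ENNReal.mul_rpow_of_nonneg _ _ hσ.le, ENNReal.rpow_add _ _ hx' enorm_ne_top]
      ring
    _ = (C * 3 ^ σ : ℝ≥0) := by
      simp [ENNReal.coe_rpow_of_nonneg _ hσ.le]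

theorem isBoundedForm_indicator_steinWeissKernel_far (hr : 1 < r) (hp : 1 < p)
    (hrp : 1 ≤ 1 / p + 1 / r) (hβ : β < dim E * (1 - 1 / p)) (hσ : σ ≤ dim E)
    (hbal : dim E * (1 / p + 1 / r - 1) + α + β = σ) :
    IsBoundedForm r p μ μ
      ({z : E × E | 2 * ‖z.2‖ₑ ≤ ‖z.1‖ₑ}.indicator (steinWeissKernel α β σ)) := by
  refine (isBoundedForm_hardyKernel μ (γ := σ - dim E - α) hr hp hrp hβ
    (by linear_combination -hbal)).mono (c := 2 ^ (-(σ - dim E))) (by finiteness)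
    ((ae_prod_ne_zero_and_ne μ).mono fun z ⟨hz₁, _, _⟩ ↦
      indicator_apply_le' (fun (hz : 2 * ‖z.2‖ₑ ≤ ‖z.1‖ₑ) ↦ ?_) fun _ ↦ zero_le)
  have hle : ‖z.2‖ₑ ≤ ‖z.1‖ₑ := (le_mul_of_one_le_left zero_le one_le_two).trans hz
  have hdist : ‖z.1‖ₑ ≤ 2 * ‖z.1 - z.2‖ₑ := by
    have htri : 2 * ‖z.1‖ₑ ≤ 2 * ‖z.1 - z.2‖ₑ + ‖z.1‖ₑ := calc
      2 * ‖z.1‖ₑ = 2 * ‖z.1 - z.2 + z.2‖ₑ := by rw [sub_add_cancel]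
      _ ≤ 2 * ‖z.1 - z.2‖ₑ + ‖z.1‖ₑ := by grw [enorm_add_le, mul_add, hz]
    rw [two_mul] at htri
    exact ENNReal.le_of_add_le_add_right enorm_ne_top htri
  calc
    _ ≤ ‖z.1‖ₑ ^ (-α) * (2 ^ (-(σ - dim E)) * ‖z.1‖ₑ ^ (σ - dim E)) * ‖z.2‖ₑ ^ (-β) := by
      unfold steinWeissKernel
      grw [ennreal_rpow_le_of_le_mul two_ne_zero ENNReal.ofNat_ne_top enorm_ne_top hdist
        (sub_nonpos.2 hσ)]
    _ = 2 ^ (-(σ - dim E)) * hardyKernel (σ - dim E - α) (-β) z := by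
      rw [hardyKernel, indicator_of_mem (by exact hle), sub_eq_add_neg _ α,
        ENNReal.rpow_add _ _ (enorm_ne_zero.2 hz₁) enorm_ne_top]
      ring

theorem isBoundedForm_indicator_steinWeissKernel_comparable (hr : 1 < r) (hp : 1 < p)
    (hrp : 1 ≤ 1 / p + 1 / r) (hαβ : 0 ≤ α + β) (hσ : 0 < σ)
    (hbal : dim E * (1 / p + 1 / r - 1) + α + β = σ) :
    IsBoundedForm r p μ μ
      ({z : E × E | ‖z.1‖ₑ ≤ 2 * ‖z.2‖ₑ ∧ ‖z.2‖ₑ ≤ 2 * ‖z.1‖ₑ}.indicator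
        (steinWeissKernel α β σ)) := by
  rcases hrp.eq_or_lt with hrp' | hrp'
  · obtain ⟨C, hC⟩ := exists_lintegral_localRieszKernel_le μ hσ
    have hp1 : 0 ≤ 1 - 1 / p := sub_nonneg.2 ((div_le_one (by linarith)).2 hp.le)
    have hr1 : 0 ≤ 1 - 1 / r := sub_nonneg.2 ((div_le_one (by linarith)).2 hr.le)
    exact (IsBoundedForm.schur hr.le hp.le hrp (measurable_localRieszKernel σ)
      ((measurable_localRieszKernel σ).comp measurable_swap) hC hC).mono
      (by finiteness) ((ae_prod_ne_zero_and_ne μ).mono fun z ⟨hz₁, hz₂, hne⟩ ↦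
        indicator_apply_le' (fun ⟨h₁₂, h₂₁⟩ ↦ steinWeissKernel_le_localRieszKernel_mul hz₁ hz₂ hne
          h₁₂ h₂₁ hp1 hr1 (by linarith) (by rw [← hbal, ← hrp']; ring)) fun _ ↦ zero_le)
  · exact (isBoundedForm_enorm_sub_rpow μ hr hp (sub_pos.2 hrp') (by ring)).mono
      (by finiteness) ((ae_prod_ne_zero_and_ne μ).mono fun z ⟨hz₁, hz₂, hne⟩ ↦
        indicator_apply_le' (fun ⟨h₁₂, h₂₁⟩ ↦ steinWeissKernel_le_enorm_sub_rpow hz₁ hz₂ hne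
          h₁₂ h₂₁ hαβ (by rw [← hbal]; ring)) fun _ ↦ zero_le)

theorem isBoundedForm_steinWeissKernel (hr : 1 < r) (hp : 1 < p) (hrp : 1 ≤ 1 / p + 1 / r)
    (hα : α < dim E * (1 - 1 / r)) (hβ : β < dim E * (1 - 1 / p)) (hαβ : 0 ≤ α + β) (hσ : 0 < σ)
    (hbal : dim E * (1 / p + 1 / r - 1) + α + β = σ) :
    IsBoundedForm r p μ μ (steinWeissKernel α β σ : E × E → ℝ≥0∞) := by
  have hσn : σ ≤ dim E := by linarith
  have hx := isBoundedForm_indicator_steinWeissKernel_far μ hr hp hrp hβ hσn hbal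
  have hy := (isBoundedForm_indicator_steinWeissKernel_far μ (α := β) (β := α) hp hr
    (by rwa [add_comm]) hα hσn (by linear_combination hbal)).swap
  have hxy := isBoundedForm_indicator_steinWeissKernel_comparable μ hr hp hrp hαβ hσ hbal
  have hmeas := measurable_steinWeissKernel (E := E) α β σ
  have hswap (z : E × E) : steinWeissKernel β α σ z.swap = steinWeissKernel α β σ z := by
    simp only [steinWeissKernel, Prod.fst_swap, Prod.snd_swap, enorm_sub_rev z.2]
    ring
  refine (hx.add (hxy.add hy (hmeas.indicator ?_)) (hmeas.indicator ?_)).mono ENNReal.one_ne_top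
    (ae_of_all _ fun z ↦ ?_)
  · exact (measurableSet_le (f := fun z : E × E ↦ ‖z.1‖ₑ) (by fun_prop) (by fun_prop)).inter
      (measurableSet_le (f := fun z : E × E ↦ ‖z.2‖ₑ) (by fun_prop) (by fun_prop))
  · exact measurableSet_le (f := fun z : E × E ↦ 2 * ‖z.2‖ₑ) (by fun_prop) (by fun_prop)
  simp only [one_mul, Pi.add_apply, Function.comp_apply, indicator, mem_ofPred_eq, hswap,
    Prod.fst_swap, Prod.snd_swap]
  rcases le_total (2 * ‖z.2‖ₑ) ‖z.1‖ₑ with h₁ | h₁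
  · rw [if_pos h₁]
    exact le_self_add
  rcases le_total (2 * ‖z.1‖ₑ) ‖z.2‖ₑ with h₂ | h₂
  · rw [if_pos h₂]
    exact le_add_self.trans le_add_self
  · rw [if_pos (c := _ ∧ _) ⟨h₁, h₂⟩]
    exact le_self_add.trans le_add_self

end SteinWeiss

section BoundedSet

theorem ennreal_rpow_le_mul_rpow_of_le {x c : ℝ≥0∞} (hx₀ : x ≠ 0) (hx : x ≠ ⊤) (hxc : x ≤ c)
    {s t : ℝ} (hts : t ≤ s) : x ^ s ≤ c ^ (s - t) * x ^ t := by
  calc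
    x ^ s = x ^ (s - t) * x ^ t := by rw [← ENNReal.rpow_add _ _ hx₀ hx, sub_add_cancel]
    _ ≤ c ^ (s - t) * x ^ t := by
      gcongr

variable {E : Type*} [NormedAddCommGroup E] [NormedSpace ℝ E] {r p α β σ : ℝ}

theorem steinWeissKernel_le_mul_steinWeissKernel {R : ℝ≥0∞} {β' σ' : ℝ} (hβ : β ≤ β')
    (hσ : σ' ≤ σ) {z : E × E} (hz₁ : ‖z.1‖ₑ ≤ R) (hz₂ : ‖z.2‖ₑ ≤ R) (h₂ : z.2 ≠ 0)
    (hne : z.1 ≠ z.2) :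
    steinWeissKernel α β σ z ≤
      (2 * R) ^ (σ - σ') * R ^ (β' - β) * steinWeissKernel α β' σ' z := by
  have hdist : ‖z.1 - z.2‖ₑ ≤ 2 * R := by
    grw [enorm_sub_le, hz₁, hz₂, two_mul]
  have hpow := ennreal_rpow_le_mul_rpow_of_le (enorm_ne_zero.2 (sub_ne_zero.2 hne)) enorm_ne_top
    hdist (sub_le_sub_right hσ (dim E : ℝ))
  have hpow₂ := ennreal_rpow_le_mul_rpow_of_le (enorm_ne_zero.2 h₂) enorm_ne_top hz₂
    (neg_le_neg hβ)
  rw [sub_sub_sub_cancel_right] at hpow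
  rw [neg_sub_neg] at hpow₂
  unfold steinWeissKernel
  grw [hpow, hpow₂]
  exact le_of_eq (by ring)

theorem exists_add_eq_mem_Ioc {κ B : ℝ} (h₀ : 0 ≤ κ + β) (h₁ : κ + β ≤ σ) (hσ : 0 < σ)
    (hB : β < B) : ∃ β' ∈ Ico β B, ∃ σ' ∈ Ioc 0 σ, κ + β' = σ' := by
  rcases h₀.eq_or_lt with h₀ | h₀
  · refine ⟨min (β + σ) ((β + B) / 2), ⟨?_, ?_⟩, _, ⟨?_, ?_⟩, rfl⟩
    all_goals grind
  · exact ⟨β, ⟨le_rfl, hB⟩, κ + β, ⟨h₀, h₁⟩, rfl⟩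

variable [MeasurableSpace E] [BorelSpace E] [FiniteDimensional ℝ E] [Nontrivial E]
  (μ : Measure E) [μ.IsAddHaarMeasure]

-- On a bounded set the balance condition may be relaxed to an inequality: the order of the kernel
-- can be decreased and the power of `|y|` increased. The latter is needed if `p = q` and `α = -β`,
-- when the balanced order would be `0`.
theorem isBoundedForm_steinWeissKernel_restrict (hr : 1 < r) (hp : 1 < p) (hrp : 1 ≤ 1 / p + 1 / r)
    (hα : α < dim E * (1 - 1 / r)) (hβ : β < dim E * (1 - 1 / p)) (hαβ : 0 ≤ α + β) (hσ : 0 < σ)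
    (hbal : dim E * (1 / p + 1 / r - 1) + α + β ≤ σ) {Ω : Set E} (hΩ : MeasurableSet Ω)
    (hΩb : Bornology.IsBounded Ω) :
    IsBoundedForm r p (μ.restrict Ω) (μ.restrict Ω) (steinWeissKernel α β σ) := by
  obtain ⟨R, hR⟩ := hΩb.exists_norm_le
  have hR' (x) (hx : x ∈ Ω) : ‖x‖ₑ ≤ .ofReal R := enorm_le_ofReal (hR x hx)
  have hθ : 0 ≤ dim E * (1 / p + 1 / r - 1) :=
    mul_nonneg (dim E).cast_nonneg (sub_nonneg.2 hrp)
  obtain ⟨β', ⟨hββ', hβ'⟩, σ', ⟨hσ', hσ'σ⟩, hbal'⟩ :=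
    exists_add_eq_mem_Ioc (by linarith) hbal hσ hβ
  have hform := isBoundedForm_steinWeissKernel μ hr hp hrp hα hβ' (by linarith) hσ' hbal'
  refine (hform.restrict (by linarith) (by linarith) hΩ hΩ).mono
    (c := (2 * .ofReal R) ^ (σ - σ') * .ofReal R ^ (β' - β)) ?_ ?_
  · have := sub_nonneg.2 hσ'σ
    have := sub_nonneg.2 hββ'
    finiteness
  rw [Measure.prod_restrict]
  filter_upwards [ae_restrict_mem (hΩ.prod hΩ), ae_restrict_of_ae (ae_prod_ne_zero_and_ne μ)]
    with z hz ⟨_, hz₂, hne⟩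
  exact steinWeissKernel_le_mul_steinWeissKernel hββ' hσ'σ (hR' _ hz.1) (hR' _ hz.2) hz₂ hne

end BoundedSet

section Subrepresentation

variable {E F : Type*} [NormedAddCommGroup E] [NormedSpace ℝ E] [NormedAddCommGroup F]
  [NormedSpace ℝ F] {Ω : Set E} {f : E → F}

theorem exists_setLIntegral_indicator_enorm_inv_smul_le [FiniteDimensional ℝ E] [Nontrivial E] :
    ∃ C : ℝ≥0, ∀ (D : ℝ≥0∞) (u : E), D ≠ 0 → D ≠ ⊤ → u ≠ 0 →
      ∫⁻ t in Ioc (0 : ℝ) 1, ENNReal.ofReal t ^ (-dim E : ℝ) *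
        {v : E | ‖v‖ₑ ≤ D}.indicator enorm (t⁻¹ • u) ≤
      C * D ^ (dim E : ℝ) * ‖u‖ₑ ^ (1 - dim E : ℝ) := by
  have hn : (0 : ℝ) < dim E := by exact_mod_cast Module.finrank_pos
  obtain ⟨C, hC⟩ := exists_setLIntegral_le_enorm_sub_rpow_le (volume : Measure ℝ)
    (s := -dim E - 1) (by rw [Module.finrank_self, Nat.cast_one]; linarith)
  replace hC (ρ : ℝ≥0∞) := hC 0 ρ
  simp only [Module.finrank_self, Nat.cast_one, sub_add_cancel, sub_zero] at hC
  refine ⟨C, fun D u hD₀ hD hu ↦ ?_⟩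
  have hu' : ‖u‖ₑ ≠ 0 := enorm_ne_zero.2 hu
  have hle (t : ℝ) (ht : t ∈ Ioc 0 1) :
      ENNReal.ofReal t ^ (-dim E : ℝ) * {v : E | ‖v‖ₑ ≤ D}.indicator enorm (t⁻¹ • u) ≤
        ‖u‖ₑ * {t : ℝ | ‖u‖ₑ / D ≤ ‖t‖ₑ}.indicator (fun t ↦ ‖t‖ₑ ^ (-dim E - 1 : ℝ)) t := by
    have ht' : ‖t‖ₑ ≠ 0 := enorm_ne_zero.2 ht.1.ne'
    have hmem : ‖u‖ₑ / D ≤ ‖t‖ₑ ↔ ‖t⁻¹ • u‖ₑ ≤ D := by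
      rw [enorm_smul, enorm_inv ht.1.ne', ENNReal.inv_mul_le_iff ht' enorm_ne_top,
        ENNReal.div_le_iff hD₀ hD]
    simp only [indicator, mem_ofPred_eq, hmem]
    split_ifs
    · rw [← Real.enorm_of_nonneg ht.1.le, enorm_smul, enorm_inv ht.1.ne', sub_eq_add_neg,
        ENNReal.rpow_add _ _ ht' enorm_ne_top, ENNReal.rpow_neg_one]
      exact le_of_eq (by ring)
    · simp
  calc
    _ ≤ ∫⁻ t : ℝ, ‖u‖ₑ * {t : ℝ | ‖u‖ₑ / D ≤ ‖t‖ₑ}.indicator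
          (fun t ↦ ‖t‖ₑ ^ (-dim E - 1 : ℝ)) t :=
      (setLIntegral_mono' measurableSet_Ioc hle).trans (setLIntegral_le_lintegral _ _)
    _ = ‖u‖ₑ * ∫⁻ t in {t : ℝ | ‖u‖ₑ / D ≤ ‖t‖ₑ}, ‖t‖ₑ ^ (-dim E - 1 : ℝ) := by
      rw [lintegral_const_mul' _ _ enorm_ne_top,
        lintegral_indicator (measurableSet_le measurable_const (by fun_prop))]
    _ ≤ ‖u‖ₑ * (C * (‖u‖ₑ / D) ^ (-dim E : ℝ)) := by
      grw [hC (‖u‖ₑ / D) (by simp [hu, hD]) (ENNReal.div_ne_top enorm_ne_top hD₀)]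
    _ = _ := by
      rw [div_eq_mul_inv, ENNReal.mul_rpow_of_ne_zero hu' (ENNReal.inv_ne_zero.2 hD),
        ENNReal.inv_rpow, ← ENNReal.rpow_neg, neg_neg, sub_eq_add_neg,
        ENNReal.rpow_add _ _ hu' enorm_ne_top, ENNReal.rpow_one]
      ring

theorem enorm_sub_le_lintegral_segment_fderivWithin (hΩ : IsOpen Ω) (hΩc : Convex ℝ Ω)
    (hf : ContDiffOn ℝ 1 f (closure Ω)) {x y : E} (hx : x ∈ Ω) (hy : y ∈ Ω) :
    ‖f x - f y‖ₑ ≤ ∫⁻ t in Ioc (0 : ℝ) 1,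
      Ω.indicator (fun z ↦ ‖fderivWithin ℝ f (closure Ω) z‖ₑ) (x + t • (y - x)) * ‖y - x‖ₑ := by
  have hmem (t : ℝ) (ht : t ∈ Icc 0 1) : x + t • (y - x) ∈ Ω := hΩc.add_smul_sub_mem hx hy ht
  have hpath : ContDiffOn ℝ 1 (fun t : ℝ ↦ f (x + t • (y - x))) (Icc 0 1) :=
    (hf.mono subset_closure).comp (ContDiff.contDiffOn (by fun_prop)) hmem
  have hderiv (t : ℝ) (ht : t ∈ Icc 0 1) : HasDerivAt (fun t : ℝ ↦ f (x + t • (y - x)))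
      (fderivWithin ℝ f (closure Ω) (x + t • (y - x)) (y - x)) t := by
    have hnhds := Filter.mem_of_superset (hΩ.mem_nhds (hmem t ht)) subset_closure
    have hline : HasDerivAt (fun t : ℝ ↦ x + t • (y - x)) (y - x) t := by
      simpa using ((hasDerivAt_id t).smul_const (y - x)).const_add x
    rw [fderivWithin_of_mem_nhds hnhds]
    exact ((hf.differentiableOn one_ne_zero).differentiableAt hnhds).hasFDerivAt.comp_hasDerivAt t
      hline
  calc
    _ ≤ ∫⁻ t in Icc (0 : ℝ) 1, ‖deriv (fun t : ℝ ↦ f (x + t • (y - x))) t‖ₑ := by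
      simpa [enorm_sub_rev] using enorm_sub_le_lintegral_deriv_of_contDiffOn_Icc hpath zero_le_one
    _ = ∫⁻ t in Ioc (0 : ℝ) 1, ‖deriv (fun t : ℝ ↦ f (x + t • (y - x))) t‖ₑ :=
      setLIntegral_congr Ioc_ae_eq_Icc.symm
    _ ≤ _ := by
      refine setLIntegral_mono' measurableSet_Ioc fun t ht ↦ ?_
      rw [(hderiv t (Ioc_subset_Icc_self ht)).deriv,
        indicator_of_mem (hmem t (Ioc_subset_Icc_self ht))]
      exact ContinuousLinearMap.le_opENorm _ _

theorem enorm_sub_average_le_laverage {α : Type*} [MeasurableSpace α] {ν : Measure α}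
    [IsFiniteMeasure ν] [NeZero ν] [CompleteSpace F] {g : α → F} (hg : Integrable g ν) (c : F) :
    ‖c - ⨍ y, g y ∂ν‖ₑ ≤ ⨍⁻ y, ‖c - g y‖ₑ ∂ν := by
  calc
    _ = ‖(⨍ _, c ∂ν) - ⨍ y, g y ∂ν‖ₑ := by rw [average_const]
    _ = ‖⨍ y, (c - g y) ∂ν‖ₑ :=
      congrArg _ (integral_sub (integrable_const c) hg.to_average).symm
    _ ≤ _ := enorm_integral_le_lintegral_enorm _

theorem measurable_indicator_of_continuousOn {α : Type*} [TopologicalSpace α] [MeasurableSpace α]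
    [OpensMeasurableSpace α] {s : Set α} (hs : MeasurableSet s) {φ : α → ℝ≥0∞}
    (hφ : ContinuousOn φ s) : Measurable (s.indicator φ) := by
  classical
  rw [← piecewise_eq_indicator]
  exact hφ.measurable_piecewise continuousOn_const hs

theorem continuousOn_fderivWithin_closure (hΩ : IsOpen Ω) (hΩc : Convex ℝ Ω) (hΩne : Ω.Nonempty)
    (hf : ContDiffOn ℝ 1 f (closure Ω)) :
    ContinuousOn (fderivWithin ℝ f (closure Ω)) (closure Ω) :=
  hf.continuousOn_fderivWithin (uniqueDiffOn_convex hΩc.closure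
    (hΩne.mono (interior_maximal subset_closure hΩ))) le_rfl

variable [MeasurableSpace E] [BorelSpace E] [FiniteDimensional ℝ E] (μ : Measure E)
  [μ.IsAddHaarMeasure]

theorem lintegral_lintegral_segment_mul {w k : E → ℝ≥0∞} (hw : Measurable w) (hk : Measurable k)
    (x : E) :
    ∫⁻ y, (∫⁻ t in Ioc (0 : ℝ) 1, w (x + t • (y - x)) * k (y - x)) ∂μ =
      ∫⁻ z, w z *
        (∫⁻ t in Ioc (0 : ℝ) 1, ENNReal.ofReal t ^ (-dim E : ℝ) * k (t⁻¹ • (z - x))) ∂μ := by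
  have hscale (t : ℝ) (ht : 0 < t) : ∫⁻ y, w (x + t • (y - x)) * k (y - x) ∂μ =
      ∫⁻ z, w z * (ENNReal.ofReal t ^ (-dim E : ℝ) * k (t⁻¹ • (z - x))) ∂μ := by
    have := lintegral_comp_smul_haar μ (fun u ↦ w (x + u) * k (t⁻¹ • u)) ht
    simp only [inv_smul_smul₀ ht.ne'] at this
    rw [lintegral_sub_right_eq_self (fun v ↦ w (x + t • v) * k v) x, this,
      ← lintegral_const_mul _ (by fun_prop), ← lintegral_sub_right_eq_self _ x]
    simp only [add_sub_cancel, mul_left_comm]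
  calc
    _ = ∫⁻ t in Ioc (0 : ℝ) 1, ∫⁻ y, w (x + t • (y - x)) * k (y - x) ∂μ :=
      lintegral_lintegral_swap (by unfold Function.uncurry; fun_prop)
    _ = ∫⁻ t in Ioc (0 : ℝ) 1, ∫⁻ z,
          w z * (ENNReal.ofReal t ^ (-dim E : ℝ) * k (t⁻¹ • (z - x))) ∂μ :=
      setLIntegral_congr_fun measurableSet_Ioc fun t ht ↦ hscale t ht.1
    _ = ∫⁻ z, (∫⁻ t in Ioc (0 : ℝ) 1,
          w z * (ENNReal.ofReal t ^ (-dim E : ℝ) * k (t⁻¹ • (z - x)))) ∂μ :=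
      lintegral_lintegral_swap (by unfold Function.uncurry; fun_prop)
    _ = _ := lintegral_congr fun z ↦ lintegral_const_mul _ (by fun_prop)

variable [Nontrivial E]

theorem exists_setLIntegral_lintegral_segment_le :
    ∃ C : ℝ≥0, ∀ (w : E → ℝ≥0∞) (D : ℝ≥0∞) (x : E), Measurable w → D ≠ 0 → D ≠ ⊤ →
      ∫⁻ y in {y | ‖y - x‖ₑ ≤ D}, (∫⁻ t in Ioc (0 : ℝ) 1, w (x + t • (y - x)) * ‖y - x‖ₑ) ∂μ ≤
        C * D ^ (dim E : ℝ) * ∫⁻ z, ‖x - z‖ₑ ^ (1 - dim E : ℝ) * w z ∂μ := by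
  obtain ⟨C, hC⟩ := exists_setLIntegral_indicator_enorm_inv_smul_le (E := E)
  refine ⟨C, fun w D x hw hD₀ hD ↦ ?_⟩
  have hball : MeasurableSet {v : E | ‖v‖ₑ ≤ D} := measurableSet_le (by fun_prop) (by fun_prop)
  calc
    _ = ∫⁻ y, (∫⁻ t in Ioc (0 : ℝ) 1,
          w (x + t • (y - x)) * {v | ‖v‖ₑ ≤ D}.indicator enorm (y - x)) ∂μ := by
      rw [← lintegral_indicator (measurableSet_le (by fun_prop) measurable_const)]
      refine lintegral_congr fun y ↦ ?_
      by_cases hy : ‖y - x‖ₑ ≤ D <;> simp [indicator, hy]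
    _ = ∫⁻ z, w z * (∫⁻ t in Ioc (0 : ℝ) 1, ENNReal.ofReal t ^ (-dim E : ℝ) *
          {v | ‖v‖ₑ ≤ D}.indicator enorm (t⁻¹ • (z - x))) ∂μ :=
      lintegral_lintegral_segment_mul μ hw (measurable_enorm.indicator hball) x
    _ ≤ ∫⁻ z, C * D ^ (dim E : ℝ) * (‖x - z‖ₑ ^ (1 - dim E : ℝ) * w z) ∂μ := by
      refine lintegral_mono_ae ((Measure.ae_ne μ x).mono fun z hz ↦ ?_)
      grw [hC D (z - x) hD₀ hD (sub_ne_zero.2 hz), enorm_sub_rev]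
      exact le_of_eq (by ring)
    _ = _ := lintegral_const_mul _ (by fun_prop)

theorem exists_enorm_sub_setAverage_le_lintegral_fderivWithin [CompleteSpace F] (hΩ : IsOpen Ω)
    (hΩc : Convex ℝ Ω) (hΩb : Bornology.IsBounded Ω) (hΩne : Ω.Nonempty) :
    ∃ C : ℝ≥0, ∀ f : E → F, ContDiffOn ℝ 1 f (closure Ω) → ∀ x ∈ Ω,
      ‖f x - ⨍ y in Ω, f y ∂μ‖ₑ ≤ C * ∫⁻ z in Ω,
        ‖x - z‖ₑ ^ (1 - dim E : ℝ) * ‖fderivWithin ℝ f (closure Ω) z‖ₑ ∂μ := by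
  obtain ⟨C, hC⟩ := exists_setLIntegral_lintegral_segment_le μ
  obtain ⟨R, hR, hΩR⟩ := hΩb.exists_pos_norm_le
  set D := 2 * ENNReal.ofReal R
  have hD (x) (hx : x ∈ Ω) (y) (hy : y ∈ Ω) : ‖y - x‖ₑ ≤ D := by
    grw [enorm_sub_le, enorm_le_ofReal (hΩR x hx), enorm_le_ofReal (hΩR y hy), ← two_mul]
  have hμ₀ : μ Ω ≠ 0 := (hΩ.measure_pos μ hΩne).ne'
  have hμ : μ Ω ≠ ⊤ := hΩb.measure_lt_top.ne
  have : NeZero (μ.restrict Ω) := ⟨by simpa using hμ₀⟩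
  have : IsFiniteMeasure (μ.restrict Ω) := isFiniteMeasure_restrict.2 hμ
  lift C * D ^ (dim E : ℝ) / μ Ω to ℝ≥0 using by finiteness with C' hC'
  refine ⟨C', fun f hf x hx ↦ ?_⟩
  have hint : IntegrableOn f Ω μ :=
    (hf.continuousOn.integrableOn_compact hΩb.isCompact_closure).mono_set subset_closure
  have hmeas := measurable_indicator_of_continuousOn hΩ.measurableSet
    ((continuousOn_fderivWithin_closure hΩ hΩc hΩne hf).mono subset_closure).enorm
  calc
    _ ≤ (∫⁻ y in Ω, ‖f x - f y‖ₑ ∂μ) / μ Ω :=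
      (enorm_sub_average_le_laverage hint (f x)).trans_eq (setLAverage_eq _ _ _)
    _ ≤ (∫⁻ y in {y | ‖y - x‖ₑ ≤ D}, (∫⁻ t in Ioc (0 : ℝ) 1,
          Ω.indicator (fun z ↦ ‖fderivWithin ℝ f (closure Ω) z‖ₑ) (x + t • (y - x)) *
            ‖y - x‖ₑ) ∂μ) / μ Ω := by
      refine ENNReal.div_le_div_right ((setLIntegral_mono' hΩ.measurableSet fun y hy ↦
        enorm_sub_le_lintegral_segment_fderivWithin hΩ hΩc hf hx hy).trans
        (lintegral_mono_set (hD x hx))) _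
    _ ≤ (C * D ^ (dim E : ℝ) * ∫⁻ z, ‖x - z‖ₑ ^ (1 - dim E : ℝ) *
          Ω.indicator (fun z ↦ ‖fderivWithin ℝ f (closure Ω) z‖ₑ) z ∂μ) / μ Ω := by
      grw [hC _ D x hmeas (by simp [D, hR]) (by finiteness)]
    _ = _ := by
      rw [hC', ← lintegral_indicator hΩ.measurableSet, ENNReal.mul_div_right_comm]
      congr! 3 with z
      by_cases hz : z ∈ Ω <;> simp [hz]

end Subrepresentation

section Poincare

variable {E F : Type*} [NormedAddCommGroup E] [NormedSpace ℝ E] [MeasurableSpace E] [BorelSpace E]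
  [FiniteDimensional ℝ E] [NormedAddCommGroup F] (μ : Measure E) [μ.IsAddHaarMeasure]
  {Ω : Set E} {p q a b s : ℝ}

theorem setLIntegral_enorm_rpow_mul_rpow_lt_top [Nontrivial E] (hΩ : MeasurableSet Ω)
    (hΩb : Bornology.IsBounded Ω) (hq : 0 ≤ q) (hs : -dim E < s * q) {φ : E → F}
    (hφ : ContinuousOn φ (closure Ω)) : ∫⁻ x in Ω, (‖x‖ₑ ^ s * ‖φ x‖ₑ) ^ q ∂μ < ⊤ := by
  obtain ⟨C, hC⟩ := exists_setLIntegral_enorm_sub_rpow_le μ hs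
  obtain ⟨M, hM⟩ := hΩb.isCompact_closure.exists_bound_of_continuousOn hφ
  obtain ⟨R, hR, hΩR⟩ := hΩb.exists_pos_norm_le
  calc
    _ ≤ ∫⁻ x in Ω, .ofReal M ^ q * ‖x‖ₑ ^ (s * q) ∂μ := by
      refine setLIntegral_mono' hΩ fun x hx ↦ ?_
      grw [ENNReal.mul_rpow_of_nonneg _ _ hq, enorm_le_ofReal (hM x (subset_closure hx)),
        ENNReal.rpow_mul]
      exact (mul_comm _ _).le
    _ ≤ .ofReal M ^ q * ∫⁻ x in {x | ‖x - 0‖ₑ ≤ .ofReal R}, ‖x - 0‖ₑ ^ (s * q) ∂μ := by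
      simp only [sub_zero]
      rw [lintegral_const_mul' _ _ (by finiteness)]
      gcongr
      exact fun x hx ↦ show ‖x‖ₑ ≤ _ from enorm_le_ofReal (hΩR x hx)
    _ ≤ .ofReal M ^ q * (C * .ofReal R ^ (s * q + dim E)) := by
      grw [hC 0 (.ofReal R) (by simpa) (by finiteness)]
    _ < ⊤ := by
      have : 0 ≤ s * q + dim E := by linarith
      finiteness

theorem integral_norm_rpow_mul_rpow_eq_toReal [Nontrivial E] (hΩ : MeasurableSet Ω) (hq : 0 ≤ q)
    {φ : E → F} (hφ : ContinuousOn φ Ω) (s : ℝ) :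
    ∫ x in Ω, (‖x‖ ^ s * ‖φ x‖) ^ q ∂μ = (∫⁻ x in Ω, (‖x‖ₑ ^ s * ‖φ x‖ₑ) ^ q ∂μ).toReal := by
  have hmeas : AEMeasurable (fun x ↦ (‖x‖ ^ s * ‖φ x‖) ^ q) (μ.restrict Ω) :=
    ((measurable_norm.pow_const s).aemeasurable.mul (hφ.norm.aemeasurable hΩ)).pow_const q
  rw [integral_eq_lintegral_of_nonneg_ae (ae_of_all _ fun x ↦ by positivity)
    hmeas.aestronglyMeasurable]
  congr 1
  refine lintegral_congr_ae ((ae_restrict_of_ae (Measure.ae_ne μ 0)).mono fun x hx ↦ ?_)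
  simp only
  rw [← ENNReal.ofReal_rpow_of_nonneg (by positivity) hq, ENNReal.ofReal_mul (by positivity),
    ofReal_norm_rpow hx, ofReal_norm]

variable [NormedSpace ℝ F] [CompleteSpace F]

theorem exists_enorm_rpow_mul_sub_setAverage_le [Nontrivial E] (a b : ℝ) (hΩ : IsOpen Ω)
    (hΩc : Convex ℝ Ω) (hΩb : Bornology.IsBounded Ω) (hΩne : Ω.Nonempty) :
    ∃ C : ℝ≥0, ∀ f : E → F, ContDiffOn ℝ 1 f (closure Ω) → ∀ x ∈ Ω,
      ‖x‖ₑ ^ a * ‖f x - ⨍ y in Ω, f y ∂μ‖ₑ ≤ ∫⁻ z in Ω, C * steinWeissKernel (-a) b 1 (x, z) *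
        (‖z‖ₑ ^ b * ‖fderivWithin ℝ f (closure Ω) z‖ₑ) ∂μ := by
  obtain ⟨C, hC⟩ := exists_enorm_sub_setAverage_le_lintegral_fderivWithin (F := F) μ hΩ hΩc hΩb hΩne
  refine ⟨C, fun f hf x hx ↦ ?_⟩
  have hg := ((continuousOn_fderivWithin_closure hΩ hΩc hΩne hf).mono
    subset_closure).enorm.aemeasurable (μ := μ) hΩ.measurableSet
  grw [hC f hf x hx, ← mul_assoc, ← lintegral_const_mul'']
  · refine (lintegral_congr_ae ((ae_restrict_of_ae (Measure.ae_ne μ 0)).mono fun z hz ↦ ?_)).le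
    have hcancel : ‖z‖ₑ ^ (-b) * ‖z‖ₑ ^ b = 1 := by
      rw [← ENNReal.rpow_add _ _ (enorm_ne_zero.2 hz) enorm_ne_top, neg_add_cancel,
        ENNReal.rpow_zero]
    calc
      _ = C * (‖x‖ₑ ^ a * ‖x - z‖ₑ ^ (1 - dim E : ℝ) * (‖z‖ₑ ^ (-b) * ‖z‖ₑ ^ b)) *
          ‖fderivWithin ℝ f (closure Ω) z‖ₑ := by rw [hcancel]; ring
      _ = _ := by simp only [steinWeissKernel, neg_neg]; ring
  · fun_prop

theorem exists_lintegral_weighted_sub_average_le [Nontrivial E] (hp : 1 < p) (hpq : p ≤ q)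
    (haq : -dim E < a * q) (hab : a ≤ b) (hb : b < dim E * (1 - 1 / p))
    (hbal : dim E * (1 / p - 1 / q) ≤ 1 + a - b) (hΩ : IsOpen Ω) (hΩc : Convex ℝ Ω)
    (hΩb : Bornology.IsBounded Ω) (hΩne : Ω.Nonempty) :
    ∃ C : ℝ≥0, ∀ f : E → F, ContDiffOn ℝ 1 f (closure Ω) →
      (∫⁻ x in Ω, (‖x‖ₑ ^ a * ‖f x - ⨍ y in Ω, f y ∂μ‖ₑ) ^ q ∂μ) ^ (1 / q) ≤
        C * (∫⁻ x in Ω, (‖x‖ₑ ^ b * ‖fderivWithin ℝ f (closure Ω) x‖ₑ) ^ p ∂μ) ^ (1 / p) := by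
  have hq : 1 < q := hp.trans_le hpq
  have hqr := (Real.HolderConjugate.conjExponent hq).symm
  have hr : 1 / q.conjExponent = 1 - 1 / q := by
    simpa only [one_div] using hqr.symm.one_sub_inv.symm
  have hqp : 1 / q ≤ 1 / p := one_div_le_one_div_of_le (by linarith) hpq
  have haq' : -a < dim E * (1 - 1 / q.conjExponent) := by
    rw [hr, sub_sub_cancel, mul_one_div, lt_div_iff₀ (by linarith)]
    linarith
  obtain ⟨C, hC⟩ := exists_enorm_rpow_mul_sub_setAverage_le (F := F) μ a b hΩ hΩc hΩb hΩne
  obtain ⟨C', hC'⟩ := ((isBoundedForm_steinWeissKernel_restrict μ (α := -a) (β := b) (σ := 1)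
    hqr.lt hp (by linarith) haq' hb (by linarith) one_pos (by rw [hr]; linarith)
    hΩ.measurableSet hΩb).mono (K₁ := fun z ↦ C * steinWeissKernel (-a) b 1 z)
    ENNReal.coe_ne_top (ae_of_all _ fun _ ↦ le_rfl)).exists_lintegral_rpow_le
      ((measurable_steinWeissKernel _ _ _).const_mul _) hqr
  refine ⟨C', fun f hf ↦ ?_⟩
  have hcont : ContinuousOn (fun x ↦ f x - ⨍ y in Ω, f y ∂μ) (closure Ω) :=
    hf.continuousOn.sub continuousOn_const
  have hderiv := continuousOn_fderivWithin_closure hΩ hΩc hΩne hf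
  have hfin := setLIntegral_enorm_rpow_mul_rpow_lt_top μ hΩ.measurableSet hΩb (by linarith) haq
    hcont
  exact hC' _ _
    ((measurable_enorm.pow_const a).aemeasurable.mul
      ((hcont.mono subset_closure).enorm.aemeasurable hΩ.measurableSet))
    ((measurable_enorm.pow_const b).aemeasurable.mul
      ((hderiv.mono subset_closure).enorm.aemeasurable hΩ.measurableSet))
    hfin.ne ((ae_restrict_mem hΩ.measurableSet).mono (hC f hf))

theorem weighted_poincare_power_weights_general (hp : 1 < p) (hpq : p ≤ q)
    (haq : -(dim E : ℝ) / q < a) (hab : a ≤ b) (hb : b < (dim E : ℝ) / (p / (p - 1)))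
    (hbal : 1 / p - 1 / q ≤ 1 / (dim E : ℝ) + (a - b) / dim E) (hΩ : IsOpen Ω)
    (hΩc : Convex ℝ Ω) (hΩb : Bornology.IsBounded Ω) (hΩne : Ω.Nonempty) :
    ∃ C : ℝ, 0 < C ∧ ∀ f : E → F, ContDiffOn ℝ 1 f (closure Ω) →
      (∫ x in Ω, (‖x‖ ^ a * ‖f x - ⨍ y in Ω, f y ∂μ‖) ^ q ∂μ) ^ (1 / q) ≤
        C * (∫ x in Ω, (‖x‖ ^ b * ‖fderivWithin ℝ f (closure Ω) x‖) ^ p ∂μ) ^ (1 / p) := by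
  have hq : 1 < q := hp.trans_le hpq
  have hp' : (dim E : ℝ) / (p / (p - 1)) = dim E * (1 - 1 / p) := by field_simp
  have hdim : (0 : ℝ) < dim E := by
    refine (dim E).cast_nonneg.lt_of_ne fun h ↦ ?_
    rw [← h] at haq hb
    norm_num at haq hb
    linarith
  have : Nontrivial E := Module.nontrivial_of_finrank_pos (R := ℝ) (by exact_mod_cast hdim)
  have haq' : -dim E < a * q := (div_lt_iff₀ (by linarith)).1 haq
  have hbp : -dim E < b * p := (div_lt_iff₀ (by linarith)).1 <| by
    refine lt_of_le_of_lt ?_ (haq.trans_le hab)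
    rw [neg_div, neg_div]
    gcongr
  have hbal' : dim E * (1 / p - 1 / q) ≤ 1 + a - b := by
    rw [← add_div, le_div_iff₀ hdim] at hbal
    linarith
  obtain ⟨C, hC⟩ := exists_lintegral_weighted_sub_average_le (F := F) μ hp hpq haq' hab
    (hp' ▸ hb) hbal' hΩ hΩc hΩb hΩne
  refine ⟨C + 1, by positivity, fun f hf ↦ ?_⟩
  have hcont : ContinuousOn (fun x ↦ f x - ⨍ y in Ω, f y ∂μ) (closure Ω) :=
    hf.continuousOn.sub continuousOn_const
  have hderiv := continuousOn_fderivWithin_closure hΩ hΩc hΩne hf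
  have hfin := setLIntegral_enorm_rpow_mul_rpow_lt_top μ hΩ.measurableSet hΩb (by linarith) hbp
    hderiv
  rw [integral_norm_rpow_mul_rpow_eq_toReal μ hΩ.measurableSet (by linarith)
      (hcont.mono subset_closure),
    integral_norm_rpow_mul_rpow_eq_toReal μ hΩ.measurableSet (by linarith)
      (hderiv.mono subset_closure), ENNReal.toReal_rpow, ENNReal.toReal_rpow]
  refine (ENNReal.toReal_mono (by finiteness) (hC f hf)).trans ?_
  rw [ENNReal.toReal_mul, ENNReal.coe_toReal]
  gcongr
  exact le_add_of_nonneg_right zero_le_one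

end Poincare

theorem weighted_poincare_power_weights
    (n : ℕ) (hn : 1 ≤ n) (p q a b : ℝ)
    (hp : 1 < p) (hpq : p ≤ q)
    (haq : -(n : ℝ) / q < a) (hab : a ≤ b) (hb : b < (n : ℝ) / (p / (p - 1)))
    (hbal : 1 / p - 1 / q ≤ 1 / (n : ℝ) + (a - b) / n)
    (Ω : Set (EuclideanSpace ℝ (Fin n)))
    (hΩo : IsOpen Ω) (hΩc : Convex ℝ Ω) (hΩb : Bornology.IsBounded Ω)
    (hΩne : Ω.Nonempty) :
    ∃ C : ℝ, 0 < C ∧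
      ∀ f : EuclideanSpace ℝ (Fin n) → ℝ, ContDiffOn ℝ (⊤ : ℕ∞) f (closure Ω) →
        (∫ x in Ω, (‖x‖ ^ a * |f x - ⨍ y in Ω, f y ∂volume|) ^ q) ^ (1 / q) ≤
          C * (∫ x in Ω, (‖x‖ ^ b * ‖fderivWithin ℝ f (closure Ω) x‖) ^ p) ^ (1 / p) := by
  obtain ⟨C, hC, h⟩ := weighted_poincare_power_weights_general (F := ℝ)
    (volume : Measure (EuclideanSpace ℝ (Fin n))) hp hpq (by simpa using haq) hab
    (by simpa using hb) (by simpa using hbal) hΩo hΩc hΩb hΩne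
  exact ⟨C, hC, fun f hf ↦ h f (hf.of_le (by exact_mod_cast le_top))⟩
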